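/- arXiv:1406.1887 — 3 statements merged into one kernel-verified Lean document; each statement's English description precedes it below -/
import Mathlib

section
/- There exists n₀ such that for every n ≥ n₀ the following holds: if F ⊆ 2^[n] contains some member of Σ*(n,2) as a subfamily and |F| ≥ Σ(n,2), then the number of copies of the butterfly contained in F is at least (|F| − Σ(n,2))·f(n). -/
def IsButterfly {n : ℕ} (S : Finset (Finset (Fin n))) : Prop :=
  ∃ A B C D : Finset (Fin n), S = {A, B, C, D} ∧ A ≠ B ∧ C ≠ D ∧
    A ⊂ C ∧ A ⊂ D ∧ B ⊂ C ∧ B ⊂ D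

open Classical in
/-- The number of copies of the butterfly contained in `F` (copies are counted as
image sets, i.e. 4-element subfamilies forming a butterfly). -/
noncomputable def numButterflies {n : ℕ} (F : Finset (Finset (Fin n))) : ℕ :=
  (F.powerset.filter (fun S => IsButterfly S)).card

def Sigma2 (n : ℕ) : ℕ := n.choose (n / 2) + n.choose (n / 2 + 1)

def levelFam (n k : ℕ) : Finset (Finset (Fin n)) :=
  Finset.univ.filter (fun S => S.card = k)

def SigmaStar (n : ℕ) : Set (Finset (Finset (Fin n))) :=
  { levelFam n (n / 2) ∪ levelFam n (n / 2 + 1),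
    levelFam n ((n + 1) / 2 - 1) ∪ levelFam n ((n + 1) / 2) }

/-- `f(n) = (⌈n/2⌉+1)·C(⌈n/2⌉,2)`. -/
def fB (n : ℕ) : ℕ := ((n + 1) / 2 + 1) * Nat.choose ((n + 1) / 2) 2

/-! The members of `F` outside two full levels `L ⊆ F` contribute disjoint sets of butterflies: to
each such `X` assign the butterflies in `insert X L` that contain `X`, so that `X` is their only
member outside `L`. If `X` lies above the levels `m, m + 1`, then each `(m + 1)`-subset `C` of `X`
together with two `m`-subsets of `C` gives one; there are at least `m + 2` choices of `C` and
`(m + 1).choose 2` choices of the pair. If `X` lies below, take complements. -/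

open Finset
open scoped FinsetFamily

section Complement

variable {n : ℕ} {S : Finset (Finset (Fin n))}

theorem IsButterfly.compls (hS : IsButterfly S) : IsButterfly Sᶜˢ := by
  obtain ⟨A, B, C, D, rfl, hAB, hCD, hAC, hAD, hBC, hBD⟩ := hS
  refine ⟨Cᶜ, Dᶜ, Aᶜ, Bᶜ, ?_, compl_injective.ne hCD, compl_injective.ne hAB,
    compl_ssubset_compl.2 hAC, compl_ssubset_compl.2 hBC, compl_ssubset_compl.2 hAD,
    compl_ssubset_compl.2 hBD⟩
  ext Y
  simp only [mem_compls, mem_insert, mem_singleton, compl_eq_comm (x := Y), eq_comm (b := Y)]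
  tauto

theorem isButterfly_compls : IsButterfly Sᶜˢ ↔ IsButterfly S :=
  ⟨fun hS => compls_compls S ▸ hS.compls, IsButterfly.compls⟩

end Complement

section Through

variable {n c : ℕ} {F L S : Finset (Finset (Fin n))} {X : Finset (Fin n)}

open Classical in
/-- The butterflies that adding `X` to the family `L` creates: those in `insert X L` that use `X`.
They are what a set `X` outside `L` contributes to the butterflies of a family containing `L`. -/
noncomputable def butterfliesThrough (L : Finset (Finset (Fin n))) (X : Finset (Fin n)) :
    Finset (Finset (Finset (Fin n))) :=
  {S ∈ (insert X L).powerset | IsButterfly S ∧ X ∈ S}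

theorem mem_butterfliesThrough :
    S ∈ butterfliesThrough L X ↔ S ⊆ insert X L ∧ IsButterfly S ∧ X ∈ S := by
  simp [butterfliesThrough]

theorem compls_mem_butterfliesThrough :
    Sᶜˢ ∈ butterfliesThrough Lᶜˢ Xᶜ ↔ S ∈ butterfliesThrough L X := by
  have compls_insert : (insert X L)ᶜˢ = insert Xᶜ Lᶜˢ := map_insert _ _ _
  simp only [mem_butterfliesThrough, ← compls_insert, compls_subset_compls, isButterfly_compls,
    mem_compls, compl_compl]

theorem card_butterfliesThrough_compls (L : Finset (Finset (Fin n))) (X : Finset (Fin n)) :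
    #(butterfliesThrough Lᶜˢ Xᶜ) = #(butterfliesThrough L X) := by
  refine card_nbij' compls compls (fun S hS => ?_)
    (fun S hS => compls_mem_butterfliesThrough.2 hS)
    (fun S _ => compls_compls S) (fun S _ => compls_compls S)
  rw [mem_coe, ← compls_compls S, compls_mem_butterfliesThrough] at hS
  exact hS

theorem pairwiseDisjoint_butterfliesThrough (F L : Finset (Finset (Fin n))) :
    (↑(F \ L) : Set (Finset (Fin n))).PairwiseDisjoint (butterfliesThrough L) := by
  intro X _ Y hY hXY
  refine disjoint_left.2 fun S hSX hSY => ?_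
  have hYS : Y ∈ insert X L :=
    (mem_butterfliesThrough.1 hSX).1 (mem_butterfliesThrough.1 hSY).2.2
  exact (mem_sdiff.1 hY).2 (mem_of_mem_insert_of_ne hYS hXY.symm)

theorem card_sdiff_mul_le_numButterflies (hLF : L ⊆ F)
    (hc : ∀ X ∈ F \ L, c ≤ #(butterfliesThrough L X)) :
    #(F \ L) * c ≤ numButterflies F := by
  classical
  calc #(F \ L) * c ≤ ∑ X ∈ F \ L, #(butterfliesThrough L X) := card_nsmul_le_sum _ _ _ hc
    _ = #((F \ L).biUnion (butterfliesThrough L)) :=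
      (card_biUnion (pairwiseDisjoint_butterfliesThrough F L)).symm
    _ ≤ numButterflies F := card_le_card fun S hS => ?_
  obtain ⟨X, hX, hSX⟩ := mem_biUnion.1 hS
  obtain ⟨hSL, hS, -⟩ := mem_butterfliesThrough.1 hSX
  exact mem_filter.2
    ⟨mem_powerset.2 (hSL.trans (insert_subset (mem_sdiff.1 hX).1 hLF)), hS⟩

end Through

section Levels

variable {n m k : ℕ} {X : Finset (Fin n)}

/-- The levels `m` and `m + 1` of the Boolean lattice `2^[n]`. -/
def consecutiveLevels (n m : ℕ) : Finset (Finset (Fin n)) :=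
  levelFam n m ∪ levelFam n (m + 1)

theorem mem_consecutiveLevels : X ∈ consecutiveLevels n m ↔ #X = m ∨ #X = m + 1 := by
  simp [consecutiveLevels, levelFam]

theorem card_levelFam (n k : ℕ) : #(levelFam n k) = n.choose k := by
  rw [levelFam, univ_filter_card_eq, card_powersetCard, card_fin]

theorem card_consecutiveLevels (n m : ℕ) :
    #(consecutiveLevels n m) = (n + 1).choose (m + 1) := by
  have hdisj : Disjoint (levelFam n m) (levelFam n (m + 1)) :=
    disjoint_filter.2 fun _ _ hm hm' => by omega
  rw [consecutiveLevels, card_union_of_disjoint hdisj, card_levelFam, card_levelFam,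
    Nat.choose_succ_succ]

theorem compls_consecutiveLevels (hmk : m + 1 + k = n) :
    (consecutiveLevels n m)ᶜˢ = consecutiveLevels n k := by
  ext Y
  have hY : #Y + #Yᶜ = n := by simp
  simp only [mem_compls, mem_consecutiveLevels]
  omega

end Levels

section Cherries

variable {α : Type*} {m : ℕ} {X : Finset α} {p : (_ : Finset α) × Finset (Finset α)}

/-- The pairs `⟨C, P⟩` of an `(m + 1)`-subset `C` of `X` and a set `P` of two `m`-subsets of `C`.
Adding a larger `X` on top turns each of them into a butterfly. -/
def cherriesBelow (m : ℕ) (X : Finset α) : Finset ((_ : Finset α) × Finset (Finset α)) :=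
  (powersetCard (m + 1) X).sigma fun C => powersetCard 2 (powersetCard m C)

theorem mem_cherriesBelow : p ∈ cherriesBelow m X ↔
    (p.1 ⊆ X ∧ #p.1 = m + 1) ∧ (∀ Y ∈ p.2, Y ⊆ p.1 ∧ #Y = m) ∧ #p.2 = 2 := by
  simp only [cherriesBelow, mem_sigma, mem_powersetCard, subset_iff]

theorem card_cherriesBelow (m : ℕ) (X : Finset α) :
    #(cherriesBelow m X) = (#X).choose (m + 1) * (m + 1).choose 2 := by
  have hpairs : ∀ C ∈ powersetCard (m + 1) X,
      #(powersetCard 2 (powersetCard m C)) = (m + 1).choose 2 := fun C hC => by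
    rw [card_powersetCard, card_powersetCard, (mem_powersetCard.1 hC).2,
      Nat.choose_succ_self_right]
  rw [cherriesBelow, card_sigma, sum_const_nat hpairs, card_powersetCard]

variable [DecidableEq α]

theorem slice_lower_of_mem_cherriesBelow (hX : m + 1 < #X) (hp : p ∈ cherriesBelow m X) :
    (insert X (insert p.1 p.2)).slice m = p.2 := by
  obtain ⟨⟨-, hC⟩, hP, -⟩ := mem_cherriesBelow.1 hp
  rw [slice, filter_insert, if_neg (by omega), filter_insert, if_neg (by omega),
    filter_true_of_mem fun Y hY => (hP Y hY).2]

theorem slice_upper_of_mem_cherriesBelow (hX : m + 1 < #X) (hp : p ∈ cherriesBelow m X) :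
    (insert X (insert p.1 p.2)).slice (m + 1) = {p.1} := by
  obtain ⟨⟨-, hC⟩, hP, -⟩ := mem_cherriesBelow.1 hp
  rw [slice, filter_insert, if_neg (by omega), filter_insert, if_pos hC,
    filter_false_of_mem fun Y hY => by have := (hP Y hY).2; omega, insert_empty]

theorem injOn_insert_cherriesBelow (hX : m + 1 < #X) :
    Set.InjOn (fun p : (_ : Finset α) × Finset (Finset α) => insert X (insert p.1 p.2))
      (cherriesBelow m X) := by
  rintro ⟨C, P⟩ hp ⟨D, Q⟩ hq (h : insert X (insert C P) = insert X (insert D Q))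
  have hPQ : P = Q := calc
    P = (insert X (insert C P)).slice m := (slice_lower_of_mem_cherriesBelow hX hp).symm
    _ = (insert X (insert D Q)).slice m := by rw [h]
    _ = Q := slice_lower_of_mem_cherriesBelow hX hq
  have hCD : ({C} : Finset (Finset α)) = {D} := calc
    {C} = (insert X (insert C P)).slice (m + 1) := (slice_upper_of_mem_cherriesBelow hX hp).symm
    _ = (insert X (insert D Q)).slice (m + 1) := by rw [h]
    _ = {D} := slice_upper_of_mem_cherriesBelow hX hq
  rw [hPQ, singleton_injective hCD]

end Cherries

section Counting

variable {n m k : ℕ} {F : Finset (Finset (Fin n))} {X : Finset (Fin n)}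
  {p : (_ : Finset (Fin n)) × Finset (Finset (Fin n))}

theorem isButterfly_insert_of_mem_cherriesBelow (hX : m + 1 < #X) (hp : p ∈ cherriesBelow m X) :
    IsButterfly (insert X (insert p.1 p.2)) := by
  obtain ⟨⟨hCX, hC⟩, hP, hP2⟩ := mem_cherriesBelow.1 hp
  obtain ⟨A, B, hAB, hPAB⟩ := card_eq_two.1 hP2
  have hCX' : p.1 ⊂ X := hCX.ssubset_of_ne (by rintro rfl; omega)
  have hPC : ∀ Y ∈ p.2, Y ⊂ p.1 := fun Y hY =>
    (hP Y hY).1.ssubset_of_ne (by rintro rfl; have := (hP _ hY).2; omega)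
  have hAC : A ⊂ p.1 := hPC A (by simp [hPAB])
  have hBC : B ⊂ p.1 := hPC B (by simp [hPAB])
  refine ⟨A, B, p.1, X, ?_, hAB, hCX'.ne, hAC, hAC.trans hCX', hBC, hBC.trans hCX'⟩
  rw [hPAB]
  ext Y
  simp only [mem_insert, mem_singleton]
  tauto

theorem insert_mem_butterfliesThrough_of_mem_cherriesBelow (hX : m + 1 < #X)
    (hp : p ∈ cherriesBelow m X) :
    insert X (insert p.1 p.2) ∈ butterfliesThrough (consecutiveLevels n m) X := by
  obtain ⟨⟨-, hC⟩, hP, -⟩ := mem_cherriesBelow.1 hp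
  have hsub : insert p.1 p.2 ⊆ consecutiveLevels n m :=
    insert_subset (mem_consecutiveLevels.2 (.inr hC))
      fun Y hY => mem_consecutiveLevels.2 (.inl (hP Y hY).2)
  exact mem_butterfliesThrough.2 ⟨insert_subset_insert X hsub,
    isButterfly_insert_of_mem_cherriesBelow hX hp, mem_insert_self _ _⟩

theorem le_card_butterfliesThrough_of_lt_card (hX : m + 1 < #X) :
    (m + 2) * (m + 1).choose 2 ≤ #(butterfliesThrough (consecutiveLevels n m) X) := by
  calc (m + 2) * (m + 1).choose 2
      = (m + 2).choose (m + 1) * (m + 1).choose 2 := by rw [Nat.choose_succ_self_right]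
    _ ≤ (#X).choose (m + 1) * (m + 1).choose 2 := by gcongr; exact hX
    _ = #(cherriesBelow m X) := (card_cherriesBelow m X).symm
    _ ≤ _ := card_le_card_of_injOn _
      (fun _ hp => insert_mem_butterfliesThrough_of_mem_cherriesBelow hX hp)
      (injOn_insert_cherriesBelow hX)

theorem le_card_butterfliesThrough_of_card_lt (hmk : m + 1 + k = n) (hX : #X < m) :
    (k + 2) * (k + 1).choose 2 ≤ #(butterfliesThrough (consecutiveLevels n m) X) := by
  have hXc : k + 1 < #Xᶜ := by
    rw [card_compl, Fintype.card_fin]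
    omega
  rw [← card_butterfliesThrough_compls, compls_consecutiveLevels hmk]
  exact le_card_butterfliesThrough_of_lt_card hXc

theorem mul_le_numButterflies_of_consecutiveLevels_subset (hmk : m + 1 + k = n)
    (hF : consecutiveLevels n m ⊆ F) :
    (#F - (n + 1).choose (m + 1)) * ((min m k + 2) * (min m k + 1).choose 2) ≤
      numButterflies F := by
  rw [← card_consecutiveLevels, ← card_sdiff_of_subset hF]
  refine card_sdiff_mul_le_numButterflies hF fun X hX => ?_
  have hXL : ¬(#X = m ∨ #X = m + 1) := mem_consecutiveLevels.not.1 (mem_sdiff.1 hX).2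
  obtain hbelow | habove : #X < m ∨ m + 1 < #X := by omega
  · refine le_trans ?_ (le_card_butterfliesThrough_of_card_lt hmk hbelow)
    gcongr <;> exact min_le_right m k
  · refine le_trans ?_ (le_card_butterfliesThrough_of_lt_card habove)
    gcongr <;> exact min_le_left m k

end Counting

section MiddleLevels

variable {n : ℕ} {S : Finset (Finset (Fin n))}

theorem exists_eq_consecutiveLevels_of_mem_sigmaStar (hn : 0 < n) (hS : S ∈ SigmaStar n) :
    ∃ m k, m + 1 + k = n ∧ min m k + 1 = (n + 1) / 2 ∧ S = consecutiveLevels n m := by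
  obtain rfl | rfl := hS
  · exact ⟨n / 2, (n + 1) / 2 - 1, by omega, by omega, rfl⟩
  · refine ⟨(n + 1) / 2 - 1, n / 2, by omega, by omega, ?_⟩
    rw [consecutiveLevels, Nat.sub_add_cancel (by omega)]

theorem choose_succ_eq_sigma2 {m k : ℕ} (hmk : m + 1 + k = n) (hmin : min m k + 1 = (n + 1) / 2) :
    (n + 1).choose (m + 1) = Sigma2 n := by
  rw [Sigma2, ← Nat.choose_succ_succ]
  obtain rfl | rfl : m = n / 2 ∨ k = n / 2 := by omega
  · rfl
  · exact Nat.choose_symm_of_eq_add (by omega)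

end MiddleLevels

theorem supersat_of_contains_sigmastar_general {n : ℕ} {F : Finset (Finset (Fin n))}
    (hF : ∃ S ∈ SigmaStar n, S ⊆ F) :
    (#F - Sigma2 n) * fB n ≤ numButterflies F := by
  obtain rfl | hn := n.eq_zero_or_pos
  · simp [fB]
  obtain ⟨S, hS, hSF⟩ := hF
  obtain ⟨m, k, hmk, hmin, rfl⟩ := exists_eq_consecutiveLevels_of_mem_sigmaStar hn hS
  rw [fB, ← hmin, ← choose_succ_eq_sigma2 hmk hmin]
  exact mul_le_numButterflies_of_consecutiveLevels_subset hmk hSF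

/-- If `F` contains some member of `Σ*(n,2)` as a subfamily and `|F| ≥ Σ(n,2)`, then `F`
contains at least `(|F| − Σ(n,2))·f(n)` copies of the butterfly. -/
theorem supersat_of_contains_sigmastar :
    ∃ n₀ : ℕ, ∀ n : ℕ, n₀ ≤ n → ∀ F : Finset (Finset (Fin n)),
      (∃ S ∈ SigmaStar n, S ⊆ F) → Sigma2 n ≤ F.card →
      (F.card - Sigma2 n) * fB n ≤ numButterflies F :=
  ⟨0, fun _ _ _ hF _ => supersat_of_contains_sigmastar_general hF⟩
end

section
/- There exists n₀ such that for every n ≥ n₀ the following holds: let E ⊆ {S ⊆ [n] : |S| = ⌈n/2⌉+1} be a family such that |E₁ ∩ E₂| < ⌈n/2⌉ for all distinct E₁, E₂ ∈ E, and let F = {S ⊆ [n] : |S| = ⌈n/2⌉−1} ∪ {S ⊆ [n] : |S| = ⌈n/2⌉} ∪ E. Then the number of copies of the butterfly contained in F is exactly |E|·f(n). -/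
/-!
Two distinct sets of size at least `k` have a union of size at least `k + 1`. Hence the two upper
sets `C`, `D` of a butterfly in the levels `k` and `k + 1` together with the code `E` on level
`k + 2` satisfy `|C ∩ D| ≥ k + 1`. The code condition therefore rules out `C, D ∈ E`, and up to
swapping `C` and `D` only one configuration remains: `C ∈ E`, `D` is a `(k + 1)`-subset of `C`, and
the lower sets `A`, `B` are two `k`-subsets of `D`. Conversely, each such choice gives a butterfly,
from which `C`, `D` and `{A, B}` can be recovered by size.
-/

section Card

open Finset

variable {α : Type*}

lemma ssubset_of_subset_of_card_lt {s t : Finset α} (hst : s ⊆ t) (hlt : #s < #t) : s ⊂ t :=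
  hst.ssubset_of_ne fun h => hlt.ne (congrArg card h)

variable [DecidableEq α]

lemma subset_of_card_le_card_inter {s t : Finset α} (h : #s ≤ #(s ∩ t)) : s ⊆ t :=
  inter_eq_left.mp (eq_of_subset_of_card_le inter_subset_left h)

lemma lt_card_union_of_ne {k : ℕ} {s t : Finset α} (hs : k ≤ #s) (ht : k ≤ #t) (hst : s ≠ t) :
    k < #(s ∪ t) := by
  by_contra! hle
  exact hst <| (eq_of_subset_of_card_le subset_union_left (hle.trans hs)).trans
    (eq_of_subset_of_card_le subset_union_right (hle.trans ht)).symm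

lemma lt_card_inter_of_ne_of_subset {k : ℕ} {A B C D : Finset α} (hA : k ≤ #A) (hB : k ≤ #B)
    (hAB : A ≠ B) (hAC : A ⊆ C) (hAD : A ⊆ D) (hBC : B ⊆ C) (hBD : B ⊆ D) : k < #(C ∩ D) :=
  (lt_card_union_of_ne hA hB hAB).trans_le <|
    card_le_card (union_subset (subset_inter hAC hAD) (subset_inter hBC hBD))

end Card

section ButterflyData

open Finset

variable {α : Type*} {E : Finset (Finset α)} {k : ℕ}

/-- The choices of a set `C ∈ E`, a `(k + 1)`-subset `D` of `C` and a pair of `k`-subsets of `D`,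
encoded by a nested non-dependent sigma type. If `E` is a code on level `k + 2`, they parametrize
the butterflies in the levels `k` and `k + 1` together with `E`. -/
def butterflyData (E : Finset (Finset α)) (k : ℕ) :
    Finset (Σ _ : Finset α, Σ _ : Finset α, Finset (Finset α)) :=
  E.sigma fun C => (C.powersetCard (k + 1)).sigma fun D => (D.powersetCard k).powersetCard 2

lemma mem_butterflyData {C D : Finset α} {P : Finset (Finset α)} :
    ⟨C, D, P⟩ ∈ butterflyData E k ↔
      C ∈ E ∧ (D ⊆ C ∧ #D = k + 1) ∧ P ⊆ D.powersetCard k ∧ #P = 2 := by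
  simp only [butterflyData, mem_sigma, mem_powersetCard]

lemma card_butterflyData (hE : (E : Set (Finset α)).Sized (k + 2)) :
    #(butterflyData E k) = #E * ((k + 2) * (k + 1).choose 2) := by
  have card_pairs {D : Finset α} (hD : #D = k + 1) :
      #((D.powersetCard k).powersetCard 2) = (k + 1).choose 2 := by
    rw [card_powersetCard, card_powersetCard, hD, Nat.choose_succ_self_right]
  have card_below {C : Finset α} (hC : C ∈ E) :
      #((C.powersetCard (k + 1)).sigma fun D => (D.powersetCard k).powersetCard 2) =
        (k + 2) * (k + 1).choose 2 := by
    rw [card_sigma, sum_const_nat fun D hD => card_pairs (mem_powersetCard.mp hD).2,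
      card_powersetCard, hE hC, Nat.choose_succ_self_right]
  rw [butterflyData, card_sigma, sum_const_nat fun C hC => card_below hC]

variable [DecidableEq α]

/-- The family `{C, D} ∪ P` given by a choice `⟨C, D, P⟩` as in `butterflyData`. -/
def butterflyOf (t : Σ _ : Finset α, Σ _ : Finset α, Finset (Finset α)) : Finset (Finset α) :=
  insert t.1 (insert t.2.1 t.2.2)

lemma butterflyOf_mk_pair (A B C D : Finset α) : butterflyOf ⟨C, D, {A, B}⟩ = {A, B, C, D} := by
  ext X
  simp only [butterflyOf, mem_insert, mem_singleton]
  tauto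

lemma butterflyOf_filter_card (hE : (E : Set (Finset α)).Sized (k + 2)) {C D : Finset α}
    {P : Finset (Finset α)} (h : ⟨C, D, P⟩ ∈ butterflyData E k) :
    {X ∈ butterflyOf ⟨C, D, P⟩ | #X = k + 2} = {C} ∧
      {X ∈ butterflyOf ⟨C, D, P⟩ | #X = k + 1} = {D} ∧
      {X ∈ butterflyOf ⟨C, D, P⟩ | #X = k} = P := by
  obtain ⟨hC, ⟨-, hD⟩, hP, -⟩ := mem_butterflyData.mp h
  have card_C : #C = k + 2 := hE hC
  have card_of_mem_P {X : Finset α} (hX : X ∈ P) : #X = k := (mem_powersetCard.mp (hP hX)).2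
  refine ⟨?_, ?_, ?_⟩ <;> ext X <;> grind [butterflyOf]

lemma injOn_butterflyOf (hE : (E : Set (Finset α)).Sized (k + 2)) :
    Set.InjOn butterflyOf (butterflyData E k : Set (Σ _ : Finset α, Σ _ : Finset α, _)) := by
  rintro ⟨C, D, P⟩ h ⟨C', D', P'⟩ h' heq
  obtain ⟨hC, hD, hP⟩ := butterflyOf_filter_card hE h
  obtain ⟨hC', hD', hP'⟩ := butterflyOf_filter_card hE h'
  rw [heq] at hC hD hP
  obtain rfl : C = C' := singleton_injective (hC.symm.trans hC')
  obtain rfl : D = D' := singleton_injective (hD.symm.trans hD')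
  obtain rfl : P = P' := hP.symm.trans hP'
  rfl

end ButterflyData

section Levels

open Finset

variable {n k : ℕ} {E S : Finset (Finset (Fin n))}

lemma mem_levelFam {X : Finset (Fin n)} : X ∈ levelFam n k ↔ #X = k := by
  simp [levelFam]

lemma mem_levelFam_union_levelFam_union {X : Finset (Fin n)} :
    X ∈ levelFam n k ∪ levelFam n (k + 1) ∪ E ↔ #X = k ∨ #X = k + 1 ∨ X ∈ E := by
  simp only [mem_union, mem_levelFam, or_assoc]

lemma sized_of_subset_levelFam (hE : E ⊆ levelFam n k) :
    (E : Set (Finset (Fin n))).Sized k :=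
  fun _ hX => mem_levelFam.mp (hE hX)

lemma IsButterfly.exists_card_le (hS : IsButterfly S) :
    ∃ A B C D : Finset (Fin n), S = {A, B, C, D} ∧ A ≠ B ∧ C ≠ D ∧
      A ⊂ C ∧ A ⊂ D ∧ B ⊂ C ∧ B ⊂ D ∧ #D ≤ #C := by
  obtain ⟨A, B, C, D, rfl, hAB, hCD, hAC, hAD, hBC, hBD⟩ := hS
  rcases le_total #D #C with hle | hle
  · exact ⟨A, B, C, D, rfl, hAB, hCD, hAC, hAD, hBC, hBD, hle⟩
  · exact ⟨A, B, D, C, by rw [pair_comm C D], hAB, hCD.symm, hAD, hAC, hBD, hBC, hle⟩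

lemma isButterfly_butterflyOf (hE : E ⊆ levelFam n (k + 2))
    {t : Σ _ : Finset (Fin n), Σ _ : Finset (Fin n), Finset (Finset (Fin n))}
    (ht : t ∈ butterflyData E k) : IsButterfly (butterflyOf t) := by
  obtain ⟨C, D, P⟩ := t
  obtain ⟨hC, ⟨hDC, hD⟩, hP, hP_two⟩ := mem_butterflyData.mp ht
  obtain ⟨A, B, hAB, rfl⟩ := card_eq_two.mp hP_two
  have D_ssubset_C : D ⊂ C := by
    refine ssubset_of_subset_of_card_lt hDC ?_
    have card_C : #C = k + 2 := mem_levelFam.mp (hE hC)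
    omega
  have ssubset_D {X : Finset (Fin n)} (hX : X ∈ ({A, B} : Finset _)) : X ⊂ D := by
    obtain ⟨hXD, card_X⟩ := mem_powersetCard.mp (hP hX)
    exact ssubset_of_subset_of_card_lt hXD (by omega)
  have hA : A ⊂ D := ssubset_D (by simp)
  have hB : B ⊂ D := ssubset_D (by simp)
  exact ⟨A, B, C, D, butterflyOf_mk_pair A B C D, hAB, D_ssubset_C.ne', hA.trans D_ssubset_C, hA,
    hB.trans D_ssubset_C, hB⟩

lemma butterflyOf_subset
    {t : Σ _ : Finset (Fin n), Σ _ : Finset (Fin n), Finset (Finset (Fin n))}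
    (ht : t ∈ butterflyData E k) :
    butterflyOf t ⊆ levelFam n k ∪ levelFam n (k + 1) ∪ E := by
  obtain ⟨C, D, P⟩ := t
  obtain ⟨hC, ⟨-, hD⟩, hP, -⟩ := mem_butterflyData.mp ht
  simp only [butterflyOf, insert_subset_iff, mem_levelFam_union_levelFam_union]
  exact ⟨.inr (.inr hC), .inr (.inl hD), fun X hX =>
    mem_levelFam_union_levelFam_union.mpr (.inl (mem_powersetCard.mp (hP hX)).2)⟩

lemma IsButterfly.exists_butterflyOf_eq (hE : E ⊆ levelFam n (k + 2))
    (hcode : (E : Set (Finset (Fin n))).Pairwise fun X Y => #(X ∩ Y) < k + 1)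
    (hS : IsButterfly S) (hSF : S ⊆ levelFam n k ∪ levelFam n (k + 1) ∪ E) :
    ∃ t ∈ butterflyData E k, butterflyOf t = S := by
  obtain ⟨A, B, C, D, rfl, hAB, hCD, hAC, hAD, hBC, hBD, hle⟩ := hS.exists_card_le
  simp only [insert_subset_iff, singleton_subset_iff, mem_levelFam_union_levelFam_union] at hSF
  obtain ⟨hA, hB, hC, hD⟩ := hSF
  have card_of_mem {X : Finset (Fin n)} (hX : X ∈ E) : #X = k + 2 := mem_levelFam.mp (hE hX)
  have le_card_A : k ≤ #A := by grind
  have le_card_B : k ≤ #B := by grind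
  have card_A_lt : #A < #D := card_lt_card hAD
  have card_B_lt : #B < #D := card_lt_card hBD
  have lt_card_inter : k < #(D ∩ C) :=
    lt_card_inter_of_ne_of_subset le_card_A le_card_B hAB hAD.subset hAC.subset
      hBD.subset hBC.subset
  have D_notMem : D ∉ E := fun hDE => by
    have hCE : C ∈ E := by grind
    have card_inter_lt : #(D ∩ C) < k + 1 := hcode hDE hCE hCD.symm
    omega
  have card_D : #D = k + 1 := by grind
  have D_subset_C : D ⊆ C := subset_of_card_le_card_inter (by omega)
  have card_D_lt : #D < #C := card_lt_card (D_subset_C.ssubset_of_ne hCD.symm)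
  have C_mem : C ∈ E := by grind
  have pair_subset : {A, B} ⊆ D.powersetCard k := by
    simp only [insert_subset_iff, singleton_subset_iff, mem_powersetCard]
    exact ⟨⟨hAD.subset, by omega⟩, ⟨hBD.subset, by omega⟩⟩
  exact ⟨⟨C, D, {A, B}⟩,
    mem_butterflyData.mpr ⟨C_mem, ⟨D_subset_C, card_D⟩, pair_subset, card_pair hAB⟩,
    butterflyOf_mk_pair A B C D⟩

theorem exact_count_middle_levels_plus_code_general (hE : E ⊆ levelFam n (k + 2))
    (hcode : (E : Set (Finset (Fin n))).Pairwise fun X Y => #(X ∩ Y) < k + 1) :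
    numButterflies (levelFam n k ∪ levelFam n (k + 1) ∪ E) =
      #E * ((k + 2) * (k + 1).choose 2) := by
  classical
  have butterflies_eq :
      {S ∈ (levelFam n k ∪ levelFam n (k + 1) ∪ E).powerset | IsButterfly S} =
        (butterflyData E k).image butterflyOf := by
    ext S
    simp only [mem_filter, mem_powerset, mem_image]
    constructor
    · rintro ⟨hSF, hS⟩
      exact hS.exists_butterflyOf_eq hE hcode hSF
    · rintro ⟨t, ht, rfl⟩
      exact ⟨butterflyOf_subset ht, isButterfly_butterflyOf hE ht⟩
  have sized_E := sized_of_subset_levelFam hE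
  rw [numButterflies, butterflies_eq, card_image_of_injOn (injOn_butterflyOf sized_E),
    card_butterflyData sized_E]

end Levels

/-- If `E` consists of sets of size `⌈n/2⌉+1` with pairwise intersections of size `< ⌈n/2⌉`,
then the two middle levels together with `E` contain exactly `|E|·f(n)` butterflies. -/
theorem exact_count_middle_levels_plus_code :
    ∃ n₀ : ℕ, ∀ n : ℕ, n₀ ≤ n → ∀ E : Finset (Finset (Fin n)),
      E ⊆ levelFam n ((n + 1) / 2 + 1) →
      (∀ E₁ ∈ E, ∀ E₂ ∈ E, E₁ ≠ E₂ → (E₁ ∩ E₂).card < (n + 1) / 2) →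
      numButterflies (levelFam n ((n + 1) / 2 - 1) ∪ levelFam n ((n + 1) / 2) ∪ E)
        = E.card * fB n := by
  refine ⟨1, fun n hn E hE hcode => ?_⟩
  obtain ⟨k, hk⟩ : ∃ k, (n + 1) / 2 = k + 1 := ⟨(n + 1) / 2 - 1, by omega⟩
  simp only [fB, hk, Nat.add_sub_cancel] at hE hcode ⊢
  exact exact_count_middle_levels_plus_code_general hE hcode
end

section
/- For all real ε ∈ (0,1) and δ ∈ (0,1) there exists n₀ such that for every n ≥ n₀ and every integer E with 1 ≤ E ≤ 2^(n^(1−ε)), every family F ⊆ 2^[n] with |F| = Σ(n,2) + E contains at least (1−δ)·E·f(n) copies of the butterfly. -/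
open Finset Numbering
open scoped Nat

/-!
Average over random maximal chains, i.e. over numberings of `[n]` and their prefixes. On a chain of
sets with weights in `[0, 1]`, the total weight minus two is at most the total weight of the
interior sets, less a penalty if there is only one set. Weighting the levels so that those far from
the middle are negligible, each `B ∈ F` near the middle contributes about
`α * β - (1 - α) * (1 - β)`, where `α` and `β` are the proportions of the maximal chains through `B`
that meet `F` below and above `B`, and these contributions sum to at least the excess `E`. A
positive contribution forces `α + β ≥ 1 - o(1)`.

If `B` has `d` members of `F` below it and `k` members covering it, then `α * #B ≤ d` and, unless
many members above `B` fail to cover it, `β * (n - #B)` is at most about `k`. With `#B ≈ n / 2`,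
the contribution of `B` times `f(n) ≈ n ^ 3 / 16` is therefore at most about
`d * C(k, 2) + C(d, 2) * k`. Butterflies in which `B` has one set below it and two covering it,
or two below it and one above it, are counted by such terms, each butterfly at most once.
-/

/-! ### Hubs of butterflies -/

section Hubs

variable {α : Type*} [PartialOrder α] {F S U : Finset α} {a b b' : α} {i j i' j' : ℕ}

open Classical in
/-- The members of the family `F` that lie strictly below `b`. -/
noncomputable def membersBelow (F : Finset α) (b : α) : Finset α := {a ∈ F | a < b}

open Classical in
/-- The members of the family `F` that lie strictly above `b`. -/
noncomputable def membersAbove (F : Finset α) (b : α) : Finset α := {a ∈ F | b < a}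

open Classical in
/-- The members of the family `F` that cover `b` in the ambient order. -/
noncomputable def membersCovering (F : Finset α) (b : α) : Finset α := {a ∈ F | b ⋖ a}

lemma mem_membersBelow : a ∈ membersBelow F b ↔ a ∈ F ∧ a < b := by simp [membersBelow]

lemma mem_membersAbove : a ∈ membersAbove F b ↔ a ∈ F ∧ b < a := by simp [membersAbove]

lemma mem_membersCovering : a ∈ membersCovering F b ↔ a ∈ F ∧ b ⋖ a := by
  simp [membersCovering]

lemma membersCovering_subset_membersAbove : membersCovering F b ⊆ membersAbove F b :=
  fun _ ha ↦ mem_membersAbove.2 <| (mem_membersCovering.1 ha).imp_right CovBy.lt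

lemma membersBelow_subset_membersBelow (h : b ≤ b') : membersBelow S b ⊆ membersBelow S b' :=
  fun _ ha ↦ mem_membersBelow.2 <| (mem_membersBelow.1 ha).imp_right h.trans_lt'

lemma card_membersBelow_lt_card_membersBelow (hb : b ∈ S) (h : b < b') :
    #(membersBelow S b) < #(membersBelow S b') :=
  card_lt_card <| ssubset_of_subset_of_ne (membersBelow_subset_membersBelow h.le) fun heq ↦
    (mem_membersBelow.1 (heq ▸ mem_membersBelow.2 ⟨hb, h⟩ : b ∈ membersBelow S b)).2.false

/-- `b` is a hub of type `(i, j)` of `S`: it belongs to `S`, is comparable to all of `S`, and has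
`i` elements of `S` below it and `j` above it. Sets with a hub of type `(1, 2)` or `(2, 1)` are
butterflies, the only ones that enter the lower bound; a set may have a hub of each type. -/
structure IsHub (i j : ℕ) (b : α) (S : Finset α) : Prop where
  mem : b ∈ S
  card_below : #(membersBelow S b) = i
  card_above : #(membersAbove S b) = j
  le_or_ge : ∀ x ∈ S, x ≤ b ∨ b ≤ x

lemma IsHub.eq (h : IsHub i j b S) (h' : IsHub i j' b' S) : b = b' := by
  have hcard : #(membersBelow S b) = #(membersBelow S b') := h.card_below.trans h'.card_below.symm
  rcases h.le_or_ge b' h'.mem with hle | hle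
  · refine (hle.eq_or_lt.resolve_right fun hlt ↦ ?_).symm
    exact (card_membersBelow_lt_card_membersBelow h'.mem hlt).ne' hcard
  · refine hle.eq_or_lt.resolve_right fun hlt ↦ ?_
    exact (card_membersBelow_lt_card_membersBelow h.mem hlt).ne hcard

lemma IsHub.not_isHub_of_covBy (h : IsHub i j b S) (hcov : ∀ a ∈ membersAbove S b, b ⋖ a)
    (hi : i < i') (hj : 0 < j') : ¬ IsHub i' j' b' S := by
  intro h'
  have hlt : b < b' := by
    rcases h'.le_or_ge b h.mem with hle | hle
    · exact hle.lt_of_ne fun heq ↦ hi.ne <| by rw [← h.card_below, ← h'.card_below, heq]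
    · have := card_le_card (membersBelow_subset_membersBelow (S := S) hle)
      rw [h.card_below, h'.card_below] at this
      omega
  obtain ⟨a, ha⟩ := card_pos.1 (h'.card_above.symm ▸ hj)
  have hba := (mem_membersAbove.1 ha).2
  exact (hcov a (mem_membersAbove.2 ⟨(mem_membersAbove.1 ha).1, hlt.trans hba⟩)).2 hlt hba

open Classical in
/-- The subsets of `F` that have `b` as a hub of type `(i, j)` and whose elements above `b` are
taken from `U`. -/
noncomputable def hubSets (i j : ℕ) (F : Finset α) (b : α) (U : Finset α) : Finset (Finset α) :=
  {S ∈ F.powerset | IsHub i j b S ∧ membersAbove S b ⊆ U}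

lemma mem_hubSets : S ∈ hubSets i j F b U ↔ S ⊆ F ∧ IsHub i j b S ∧ membersAbove S b ⊆ U := by
  simp [hubSets]

section Insert

variable [DecidableEq α] {P Q : Finset α}

lemma membersBelow_insert_union (hP : ∀ a ∈ P, a < b) (hQ : ∀ a ∈ Q, b < a) :
    membersBelow (insert b (P ∪ Q)) b = P := by
  ext a
  simp only [mem_membersBelow, mem_insert, mem_union]
  constructor
  · rintro ⟨rfl | ha | ha, hab⟩
    · exact (hab.false).elim
    · exact ha
    · exact (hab.asymm (hQ a ha)).elim
  · exact fun ha ↦ ⟨.inr (.inl ha), hP a ha⟩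

lemma membersAbove_insert_union (hP : ∀ a ∈ P, a < b) (hQ : ∀ a ∈ Q, b < a) :
    membersAbove (insert b (P ∪ Q)) b = Q := by
  ext a
  simp only [mem_membersAbove, mem_insert, mem_union]
  constructor
  · rintro ⟨rfl | ha | ha, hba⟩
    · exact (hba.false).elim
    · exact (hba.asymm (hP a ha)).elim
    · exact ha
  · exact fun ha ↦ ⟨.inr (.inr ha), hQ a ha⟩

lemma isHub_insert_union (hP : ∀ a ∈ P, a < b) (hQ : ∀ a ∈ Q, b < a) :
    IsHub #P #Q b (insert b (P ∪ Q)) where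
  mem := mem_insert_self _ _
  card_below := by rw [membersBelow_insert_union hP hQ]
  card_above := by rw [membersAbove_insert_union hP hQ]
  le_or_ge x hx := by
    rcases mem_insert.1 hx with rfl | hx
    · exact .inl le_rfl
    · exact (mem_union.1 hx).imp (fun h ↦ (hP x h).le) fun h ↦ (hQ x h).le

lemma IsHub.eq_insert_union (h : IsHub i j b S) :
    S = insert b (membersBelow S b ∪ membersAbove S b) := by
  ext x
  simp only [mem_insert, mem_union, mem_membersBelow, mem_membersAbove]
  refine ⟨fun hx ↦ ?_, ?_⟩
  · rcases h.le_or_ge x hx with hle | hle <;> rcases hle.eq_or_lt with heq | hlt <;> grind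
  · rintro (rfl | hx | hx)
    exacts [h.mem, hx.1, hx.1]

end Insert

lemma choose_mul_choose_le_card_hubSets (hb : b ∈ F) (hU : U ⊆ membersAbove F b) :
    (#(membersBelow F b)).choose i * (#U).choose j ≤ #(hubSets i j F b U) := by
  classical
  rw [← card_powersetCard i, ← card_powersetCard j, ← card_product]
  have hlt {P Q : Finset α}
      (h : (P, Q) ∈ (membersBelow F b).powersetCard i ×ˢ U.powersetCard j) :
      (∀ a ∈ P, a < b) ∧ ∀ a ∈ Q, b < a := by
    rw [mem_product, mem_powersetCard, mem_powersetCard] at h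
    exact ⟨fun a ha ↦ (mem_membersBelow.1 (h.1.1 ha)).2,
      fun a ha ↦ (mem_membersAbove.1 (hU (h.2.1 ha))).2⟩
  refine card_le_card_of_injOn (fun PQ ↦ insert b (PQ.1 ∪ PQ.2)) ?_ ?_
  · rintro ⟨P, Q⟩ h
    obtain ⟨hP, hQ⟩ := hlt h
    simp only [coe_product, Set.mem_prod, mem_coe, mem_powersetCard] at h
    obtain ⟨⟨hPF, rfl⟩, hQU, rfl⟩ := h
    refine mem_hubSets.2 ⟨?_, isHub_insert_union hP hQ, ?_⟩
    · refine insert_subset hb (union_subset (hPF.trans ?_) ((hQU.trans hU).trans ?_))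
      · exact fun a ha ↦ (mem_membersBelow.1 ha).1
      · exact fun a ha ↦ (mem_membersAbove.1 ha).1
    · rwa [membersAbove_insert_union hP hQ]
  · rintro ⟨P, Q⟩ h ⟨P', Q'⟩ h' heq
    obtain ⟨hP, hQ⟩ := hlt h
    obtain ⟨hP', hQ'⟩ := hlt h'
    dsimp only at heq
    rw [Prod.mk.injEq]
    constructor
    · rw [← membersBelow_insert_union hP hQ, heq, membersBelow_insert_union hP' hQ']
    · rw [← membersAbove_insert_union hP hQ, heq, membersAbove_insert_union hP' hQ']

lemma card_biUnion_hubSets [DecidableEq α] (F : Finset α) (U : α → Finset α) :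
    #(F.biUnion fun b ↦ hubSets i j F b (U b)) = ∑ b ∈ F, #(hubSets i j F b (U b)) :=
  card_biUnion fun _ _ _ _ hne ↦ disjoint_left.2 fun _ hS hS' ↦
    hne <| (mem_hubSets.1 hS).2.1.eq (mem_hubSets.1 hS').2.1

end Hubs

section CountingButterflies

variable {n : ℕ} {F S : Finset (Finset (Fin n))} {B : Finset (Fin n)}

lemma IsHub.isButterfly_one_two (h : IsHub 1 2 B S) : IsButterfly S := by
  obtain ⟨A, hA⟩ := card_eq_one.1 h.card_below
  obtain ⟨C, D, hCD, hCDeq⟩ := card_eq_two.1 h.card_above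
  have hAB : A < B := (mem_membersBelow.1 (hA ▸ mem_singleton_self A)).2
  have hBC : B < C := (mem_membersAbove.1 (hCDeq ▸ mem_insert_self C {D})).2
  have hBD : B < D :=
    (mem_membersAbove.1 (hCDeq ▸ mem_insert_of_mem (mem_singleton_self D))).2
  refine ⟨A, B, C, D, ?_, hAB.ne, hCD, hAB.trans hBC, hAB.trans hBD, hBC, hBD⟩
  rw [h.eq_insert_union, hA, hCDeq]
  grind

lemma IsHub.isButterfly_two_one (h : IsHub 2 1 B S) : IsButterfly S := by
  obtain ⟨A, A', hAA', hAeq⟩ := card_eq_two.1 h.card_below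
  obtain ⟨C, hC⟩ := card_eq_one.1 h.card_above
  have hAB : A < B := (mem_membersBelow.1 (hAeq ▸ mem_insert_self A {A'})).2
  have hA'B : A' < B :=
    (mem_membersBelow.1 (hAeq ▸ mem_insert_of_mem (mem_singleton_self A'))).2
  have hBC : B < C := (mem_membersAbove.1 (hC ▸ mem_singleton_self C)).2
  refine ⟨A, A', B, C, ?_, hAA', hBC.ne, hAB, hAB.trans hBC, hA'B, hA'B.trans hBC⟩
  rw [h.eq_insert_union, hAeq, hC]
  grind

lemma card_le_numButterflies {𝒮 : Finset (Finset (Finset (Fin n)))}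
    (h𝒮 : ∀ S ∈ 𝒮, S ⊆ F ∧ IsButterfly S) : #𝒮 ≤ numButterflies F := by
  classical
  exact card_le_card fun S hS ↦ mem_filter.2 ⟨mem_powerset.2 (h𝒮 S hS).1, (h𝒮 S hS).2⟩

theorem sum_card_below_mul_choose_card_above_le_numButterflies
    (F : Finset (Finset (Fin n))) :
    ∑ B ∈ F, #(membersBelow F B) * (#(membersAbove F B)).choose 2 ≤ numButterflies F := by
  calc ∑ B ∈ F, #(membersBelow F B) * (#(membersAbove F B)).choose 2
    _ ≤ ∑ B ∈ F, #(hubSets 1 2 F B (membersAbove F B)) := sum_le_sum fun B hB ↦ by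
        simpa using choose_mul_choose_le_card_hubSets (i := 1) (j := 2) hB subset_rfl
    _ = #(F.biUnion fun B ↦ hubSets 1 2 F B (membersAbove F B)) :=
        (card_biUnion_hubSets F _).symm
    _ ≤ numButterflies F := card_le_numButterflies fun S hS ↦ by
        obtain ⟨B, -, hS⟩ := mem_biUnion.1 hS
        exact ⟨(mem_hubSets.1 hS).1, (mem_hubSets.1 hS).2.1.isButterfly_one_two⟩

/- Requiring the two upper sets to cover the hub of type `(1, 2)` is what keeps a butterfly from
being counted again through a hub of type `(2, 1)`. -/
theorem sum_covering_add_sum_below_le_numButterflies (F : Finset (Finset (Fin n))) :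
    ∑ B ∈ F, (#(membersBelow F B) * (#(membersCovering F B)).choose 2 +
      (#(membersBelow F B)).choose 2 * #(membersAbove F B)) ≤ numButterflies F := by
  have hdisj : Disjoint (F.biUnion fun B ↦ hubSets 1 2 F B (membersCovering F B))
      (F.biUnion fun B ↦ hubSets 2 1 F B (membersAbove F B)) := by
    simp only [disjoint_left, mem_biUnion, mem_hubSets, not_exists, not_and]
    rintro S ⟨B, -, -, hS, hcov⟩ B' - - hS'
    exact (hS.not_isHub_of_covBy (fun A hA ↦ (mem_membersCovering.1 (hcov hA)).2)
      one_lt_two one_pos hS').elim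
  calc ∑ B ∈ F, (#(membersBelow F B) * (#(membersCovering F B)).choose 2 +
        (#(membersBelow F B)).choose 2 * #(membersAbove F B))
    _ ≤ ∑ B ∈ F, (#(hubSets 1 2 F B (membersCovering F B)) +
          #(hubSets 2 1 F B (membersAbove F B))) := by
        refine sum_le_sum fun B hB ↦ add_le_add ?_ ?_
        · simpa using choose_mul_choose_le_card_hubSets (i := 1) (j := 2) hB
            membersCovering_subset_membersAbove
        · simpa using choose_mul_choose_le_card_hubSets (i := 2) (j := 1) hB subset_rfl
    _ = #((F.biUnion fun B ↦ hubSets 1 2 F B (membersCovering F B)) ∪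
          F.biUnion fun B ↦ hubSets 2 1 F B (membersAbove F B)) := by
        rw [card_union_of_disjoint hdisj, card_biUnion_hubSets, card_biUnion_hubSets,
          sum_add_distrib]
    _ ≤ numButterflies F := card_le_numButterflies fun S hS ↦ by
        rcases mem_union.1 hS with hS | hS <;> obtain ⟨B, -, hS⟩ := mem_biUnion.1 hS
        · exact ⟨(mem_hubSets.1 hS).1, (mem_hubSets.1 hS).2.1.isButterfly_one_two⟩
        · exact ⟨(mem_hubSets.1 hS).1, (mem_hubSets.1 hS).2.1.isButterfly_two_one⟩

end CountingButterflies

/-! ### Numberings through a given set -/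

section MonotoneBinomials

lemma choose_le_choose_of_le_half {p r s : ℕ} (hrs : r ≤ s) (hs : s ≤ p / 2) :
    p.choose r ≤ p.choose s := by
  induction s, hrs using Nat.le_induction with
  | base => rfl
  | succ k _ ih => exact (ih (by omega)).trans (Nat.choose_le_succ_of_lt_half_left (by omega))

lemma choose_two_le_choose {p r : ℕ} (hr : 2 ≤ r) (hrp : r + 2 ≤ p) :
    p.choose 2 ≤ p.choose r := by
  rcases le_or_gt r (p / 2) with h | h
  · exact choose_le_choose_of_le_half hr h
  · rw [← Nat.choose_symm (by omega : r ≤ p)]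
    exact choose_le_choose_of_le_half (by omega) (by omega)

end MonotoneBinomials

section Numberings

lemma covBy_iff_card_sub_card_eq_one {X : Type*} {A B : Finset X} (h : B ⊂ A) :
    B ⋖ A ↔ #A - #B = 1 := by
  classical
  rw [covBy_iff_card_sdiff_eq_one, card_sdiff_of_subset h.subset]
  exact and_iff_right h.subset

variable {X : Type*} [Fintype X] [DecidableEq X] {A B C : Finset X}

lemma isPrefix_fst_prefixedEquiv_iff (hAB : A ⊆ B) (f : prefixed B) :
    (prefixedEquiv B f).1.IsPrefix (A.subtype (· ∈ B)) ↔ f.1.IsPrefix A := by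
  have hcard : #(A.subtype (· ∈ B)) = #A := by
    rw [card_subtype, filter_true_of_mem hAB]
  have hf := mem_prefixed.1 f.2
  constructor
  · intro h x
    by_cases hx : x ∈ B
    · have := h ⟨x, hx⟩
      rwa [mem_subtype, hcard] at this
    · have hBx := (hf x).not.1 hx
      exact iff_of_false (fun hA ↦ hx (hAB hA)) fun hlt ↦ hBx (hlt.trans_le (card_le_card hAB))
  · intro h x
    rw [mem_subtype, hcard]
    exact h x

lemma card_subtype_mem_compl (hBC : B ⊆ C) : #(C.subtype (· ∈ Bᶜ)) = #C - #B := by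
  rw [card_subtype, ← card_sdiff_of_subset hBC]
  congr 1
  ext x
  simp

lemma isPrefix_snd_prefixedEquiv_iff (hBC : B ⊆ C) (f : prefixed B) :
    (prefixedEquiv B f).2.IsPrefix (C.subtype (· ∈ Bᶜ)) ↔ f.1.IsPrefix C := by
  have hf := mem_prefixed.1 f.2
  have hle := card_le_card hBC
  have hsub (x : X) (hx : x ∉ B) : ((f.1 x : ℕ) - #B < #C - #B) ↔ (f.1 x : ℕ) < #C := by
    have := (hf x).not.1 hx
    omega
  constructor
  · intro h x
    by_cases hx : x ∈ B
    · exact iff_of_true (hBC hx) (((hf x).1 hx).trans_le hle)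
    · have hxC := h ⟨x, mem_compl.2 hx⟩
      rw [mem_subtype, card_subtype_mem_compl hBC] at hxC
      exact hxC.trans (hsub x hx)
  · intro h x
    rw [mem_subtype, card_subtype_mem_compl hBC]
    exact (h x).trans (hsub x (mem_compl.1 x.2)).symm

lemma card_filter_prefixed_eq_mul {P : Numbering X → Prop} [DecidablePred P]
    {l : Numbering B → Prop} [DecidablePred l] {u : Numbering ↑Bᶜ → Prop} [DecidablePred u]
    (h : ∀ f : prefixed B, P f ↔ l (prefixedEquiv B f).1 ∧ u (prefixedEquiv B f).2) :
    #{f ∈ prefixed B | P f} = #{g | l g} * #{g | u g} := by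
  rw [← card_product]
  refine card_bij (fun f hf ↦ prefixedEquiv B ⟨f, (mem_filter.1 hf).1⟩) ?_ ?_ ?_
  · intro f hf
    simpa using (h ⟨f, (mem_filter.1 hf).1⟩).1 (mem_filter.1 hf).2
  · intro f hf f' hf' heq
    exact congrArg Subtype.val ((prefixedEquiv B).injective heq)
  · rintro ⟨g, g'⟩ hg
    obtain ⟨f, hf⟩ := (prefixedEquiv B).surjective (g, g')
    refine ⟨f, mem_filter.2 ⟨f.2, (h f).2 ?_⟩, hf⟩
    simpa [hf] using hg

lemma card_filter_prefixed_mul_choose_of_subset (hAB : A ⊆ B) :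
    #{f ∈ prefixed B | f.IsPrefix A} * (#B).choose (#B - #A) = #(prefixed B) := by
  have hle := card_le_card hAB
  rw [card_filter_prefixed_eq_mul (l := fun g ↦ g.IsPrefix (A.subtype (· ∈ B)))
    (u := fun _ ↦ True) fun f ↦ by rw [isPrefix_fst_prefixedEquiv_iff hAB, and_true],
    ← prefixed, card_prefixed, card_prefixed, card_subtype, filter_true_of_mem hAB,
    filter_true, card_univ, Fintype.card_numbering, Fintype.card_coe, Fintype.card_coe,
    card_compl, ← Nat.choose_mul_factorial_mul_factorial hle, Nat.choose_symm hle]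
  ring

lemma card_filter_prefixed_mul_choose_of_superset (hBC : B ⊆ C) :
    #{f ∈ prefixed B | f.IsPrefix C} * (Fintype.card X - #B).choose (#C - #B) =
      #(prefixed B) := by
  have hle : #C - #B ≤ Fintype.card X - #B := Nat.sub_le_sub_right (card_le_univ C) _
  rw [card_filter_prefixed_eq_mul (l := fun _ ↦ True)
    (u := fun g ↦ g.IsPrefix (C.subtype (· ∈ Bᶜ))) fun f ↦ by
      rw [isPrefix_snd_prefixedEquiv_iff hBC, true_and],
    ← prefixed, card_prefixed, card_prefixed, card_subtype_mem_compl hBC,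
    filter_true, card_univ, Fintype.card_numbering, Fintype.card_coe, Fintype.card_coe,
    card_compl, ← Nat.choose_mul_factorial_mul_factorial hle]
  ring

lemma card_prefixed_pos (B : Finset X) : 0 < #(prefixed B) := by
  rw [card_prefixed]
  positivity

/-- The proportion of those numberings with prefix `B` that have a member of `𝒜` among their
prefixes, i.e. the probability that a uniformly random maximal chain through `B` meets `𝒜`. -/
noncomputable def crossingDensity (𝒜 : Finset (Finset X)) (B : Finset X) : ℝ :=
  #{f ∈ prefixed B | ∃ A ∈ 𝒜, f.IsPrefix A} / #(prefixed B)

variable {𝒜 𝒞 F G : Finset (Finset X)}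

lemma crossingDensity_nonneg : 0 ≤ crossingDensity 𝒜 B := by
  unfold crossingDensity
  positivity

lemma crossingDensity_le_one : crossingDensity 𝒜 B ≤ 1 :=
  div_le_one_of_le₀ (mod_cast card_filter_le _ _) (by positivity)

lemma card_filter_exists_isPrefix :
    (#{f ∈ prefixed B | ∃ A ∈ 𝒜, f.IsPrefix A} : ℝ) = #(prefixed B) * crossingDensity 𝒜 B :=
  (mul_div_cancel₀ _ (mod_cast (card_prefixed_pos B).ne')).symm

/- Conditionally on passing through `B`, the parts of a random maximal chain below and above `B`
are independent. -/
lemma card_filter_exists_isPrefix_and (h𝒜 : ∀ A ∈ 𝒜, A ⊆ B) (h𝒞 : ∀ C ∈ 𝒞, B ⊆ C) :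
    (#{f ∈ prefixed B | (∃ A ∈ 𝒜, f.IsPrefix A) ∧ ∃ C ∈ 𝒞, f.IsPrefix C} : ℝ) =
      #(prefixed B) * (crossingDensity 𝒜 B * crossingDensity 𝒞 B) := by
  let l (g : Numbering B) : Prop := ∃ A ∈ 𝒜, g.IsPrefix (A.subtype (· ∈ B))
  let u (g : Numbering ↑Bᶜ) : Prop := ∃ C ∈ 𝒞, g.IsPrefix (C.subtype (· ∈ Bᶜ))
  have hl (f : prefixed B) : (∃ A ∈ 𝒜, f.1.IsPrefix A) ↔ l (prefixedEquiv B f).1 :=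
    exists_congr fun A ↦ and_congr_right fun hA ↦
      (isPrefix_fst_prefixedEquiv_iff (h𝒜 A hA) f).symm
  have hu (f : prefixed B) : (∃ C ∈ 𝒞, f.1.IsPrefix C) ↔ u (prefixedEquiv B f).2 :=
    exists_congr fun C ↦ and_congr_right fun hC ↦
      (isPrefix_snd_prefixedEquiv_iff (h𝒞 C hC) f).symm
  have hlow := card_filter_prefixed_eq_mul (P := fun f ↦ ∃ A ∈ 𝒜, f.IsPrefix A) (l := l)
    (u := fun _ ↦ True) fun f ↦ (hl f).trans (and_true _).symm.to_iff
  have hupp := card_filter_prefixed_eq_mul (P := fun f ↦ ∃ C ∈ 𝒞, f.IsPrefix C)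
    (l := fun _ ↦ True) (u := u) fun f ↦ (hu f).trans (true_and _).symm.to_iff
  have hboth := card_filter_prefixed_eq_mul
    (P := fun f ↦ (∃ A ∈ 𝒜, f.IsPrefix A) ∧ ∃ C ∈ 𝒞, f.IsPrefix C) (l := l) (u := u)
    fun f ↦ and_congr (hl f) (hu f)
  have hall := card_filter_prefixed_eq_mul (B := B) (P := fun _ ↦ True) (l := fun _ ↦ True)
    (u := fun _ ↦ True) fun _ ↦ (and_self _).symm.to_iff
  rw [filter_true] at hall
  have hne : (#(prefixed B) : ℝ) ≠ 0 := mod_cast (card_prefixed_pos B).ne'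
  unfold crossingDensity
  rw [div_mul_div_comm, mul_div_assoc', mul_div_mul_left _ _ hne, eq_div_iff hne]
  norm_cast
  rw [hboth, hlow, hupp, hall]
  ring

lemma crossingDensity_le_sum :
    crossingDensity 𝒜 B ≤
      ∑ A ∈ 𝒜, (#{f ∈ prefixed B | f.IsPrefix A} : ℝ) / #(prefixed B) := by
  have hunion : {f ∈ prefixed B | ∃ A ∈ 𝒜, f.IsPrefix A} =
      𝒜.biUnion fun A ↦ {f ∈ prefixed B | f.IsPrefix A} := by
    ext f
    simp only [mem_filter, mem_biUnion]
    tauto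
  rw [← sum_div, crossingDensity, hunion]
  gcongr
  exact_mod_cast card_biUnion_le

lemma mul_one_div_choose_le {p r : ℕ} (hr : 1 ≤ r) (hrp : r + 2 ≤ p) :
    (p * (1 / p.choose r) : ℝ) ≤ if r = 1 then (1 : ℝ) else 2 / (p - 1) := by
  have hp : (3 : ℝ) ≤ p := mod_cast (by omega : 3 ≤ p)
  have hpos : 0 < p.choose r := Nat.choose_pos (by omega)
  split_ifs with h
  · rw [h, Nat.choose_one_right, mul_one_div_cancel (by positivity)]
  · have hle : (p * (p - 1) / 2 : ℝ) ≤ p.choose r := by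
      rw [← Nat.cast_choose_two]
      exact_mod_cast choose_two_le_choose (by omega) hrp
    rw [mul_one_div, div_le_div_iff₀ (by positivity) (by linarith)]
    linarith

lemma mul_crossingDensity_le {p : ℕ} {r : Finset X → ℕ}
    (hcard : ∀ A ∈ 𝒜, #{f ∈ prefixed B | f.IsPrefix A} * p.choose (r A) = #(prefixed B))
    (hr : ∀ A ∈ 𝒜, 1 ≤ r A ∧ r A + 2 ≤ p) :
    p * crossingDensity 𝒜 B ≤
      #{A ∈ 𝒜 | r A = 1} + #{A ∈ 𝒜 | r A ≠ 1} * (2 / (p - 1) : ℝ) := by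
  have hdens : ∀ A ∈ 𝒜, (#{f ∈ prefixed B | f.IsPrefix A} : ℝ) / #(prefixed B) =
      1 / p.choose (r A) := by
    intro A hA
    have hK : (0 : ℝ) < #(prefixed B) := mod_cast card_prefixed_pos B
    have hpos : 0 < p.choose (r A) := Nat.choose_pos (by have := hr A hA; omega)
    rw [div_eq_div_iff hK.ne' (by positivity), one_mul]
    exact_mod_cast hcard A hA
  calc p * crossingDensity 𝒜 B
    _ ≤ p * ∑ A ∈ 𝒜, (#{f ∈ prefixed B | f.IsPrefix A} : ℝ) / #(prefixed B) := by
        gcongr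
        exact crossingDensity_le_sum
    _ = ∑ A ∈ 𝒜, (p * (1 / p.choose (r A)) : ℝ) := by
        rw [sum_congr rfl hdens, mul_sum]
    _ ≤ ∑ A ∈ 𝒜, if r A = 1 then (1 : ℝ) else 2 / (p - 1) :=
        sum_le_sum fun A hA ↦ mul_one_div_choose_le (hr A hA).1 (hr A hA).2
    _ = _ := by rw [sum_ite, sum_const, sum_const, nsmul_eq_mul, nsmul_eq_mul, mul_one]

lemma two_div_sub_one_le_one {p : ℝ} (hp : 3 ≤ p) : 2 / (p - 1) ≤ 1 := by
  rw [div_le_one (by linarith)]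
  linarith

lemma card_mul_crossingDensity_membersBelow_le (hB : 3 ≤ #B) (hG : ∀ A ∈ G, 2 ≤ #A) :
    #B * crossingDensity (membersBelow G B) B ≤ #(membersBelow G B) := by
  have hlt : ∀ A ∈ membersBelow G B, A ⊂ B := fun A hA ↦ (mem_membersBelow.1 hA).2
  have hbound := mul_crossingDensity_le (𝒜 := membersBelow G B) (r := fun A ↦ #B - #A)
    (fun A hA ↦ card_filter_prefixed_mul_choose_of_subset (hlt A hA).subset) fun A hA ↦ by
      have h1 := card_lt_card (hlt A hA)
      have h2 := hG A (mem_membersBelow.1 hA).1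
      omega
  have hfactor := two_div_sub_one_le_one (p := #B) (mod_cast hB)
  have hsplit := card_filter_add_card_filter_not (s := membersBelow G B) (#B - #· = 1)
  rw [← hsplit]
  push_cast
  exact hbound.trans <| add_le_add_right (mul_le_of_le_one_right (by positivity) hfactor) _

lemma card_compl_mul_crossingDensity_membersAbove_le (hGF : G ⊆ F)
    (hB : 3 ≤ Fintype.card X - #B) (hG : ∀ A ∈ G, #A + 2 ≤ Fintype.card X) :
    (Fintype.card X - #B : ℕ) * crossingDensity (membersAbove G B) B ≤
      #(membersCovering F B) + (#(membersAbove F B) - #(membersCovering F B)) *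
        (2 / ((Fintype.card X - #B : ℕ) - 1) : ℝ) := by
  have hlt : ∀ A ∈ membersAbove G B, B ⊂ A := fun A hA ↦ (mem_membersAbove.1 hA).2
  have hbound := mul_crossingDensity_le (𝒜 := membersAbove G B) (r := fun A ↦ #A - #B)
    (fun A hA ↦ card_filter_prefixed_mul_choose_of_superset (hlt A hA).subset) fun A hA ↦ by
      have h1 := card_lt_card (hlt A hA)
      have h2 := hG A (mem_membersAbove.1 hA).1
      omega
  have hq : (3 : ℝ) ≤ (Fintype.card X - #B : ℕ) := mod_cast hB
  have hcov : {A ∈ membersAbove G B | #A - #B = 1} ⊆ membersCovering F B := by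
    intro A hA
    obtain ⟨hAG, hA1⟩ := mem_filter.1 hA
    exact mem_membersCovering.2 ⟨hGF (mem_membersAbove.1 hAG).1,
      (covBy_iff_card_sub_card_eq_one (hlt A hAG)).2 hA1⟩
  have hnoncov : {A ∈ membersAbove G B | #A - #B ≠ 1} ⊆
      membersAbove F B \ membersCovering F B := by
    intro A hA
    obtain ⟨hAG, hA1⟩ := mem_filter.1 hA
    refine mem_sdiff.2 ⟨mem_membersAbove.2 ⟨hGF (mem_membersAbove.1 hAG).1, hlt A hAG⟩, ?_⟩
    exact fun h ↦ hA1 ((covBy_iff_card_sub_card_eq_one (hlt A hAG)).1 (mem_membersCovering.1 h).2)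
  refine hbound.trans (add_le_add (mod_cast card_le_card hcov) ?_)
  refine mul_le_mul_of_nonneg_right ?_ (div_nonneg zero_le_two (by linarith))
  rw [← cast_card_sdiff membersCovering_subset_membersAbove]
  exact_mod_cast card_le_card hnoncov

end Numberings

/-! ### Averaging over maximal chains -/

section ChainInequality

/-- The indicator that a finite set is nonempty, as a real number. -/
noncomputable def nonemptyIndicator {α : Type*} (S : Finset α) : ℝ := if S.Nonempty then 1 else 0

/-- The contribution to the chain inequality of an element of weight `l` of a chain. On a chain
`a` and `b` indicate that the chain continues below and above the element, so that interior elements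
contribute `l` and the only element of a singleton contributes `-(1 - 2 * c)`; `I` and `J` indicate
that the ends of the chain may absorb an extra weight `c` from below and from above. The
expression is multi-affine in `a` and `b`, so it can be averaged over independent events. -/
def chainTerm (c l I J a b : ℝ) : ℝ :=
  l * (a * b) - (1 - 2 * c) * ((1 - a) * (1 - b)) +
    c * l * (I * ((1 - a) * b) + J * (a * (1 - b)))

variable {α : Type*}

lemma nonemptyIndicator_of_nonempty {S : Finset α} (h : S.Nonempty) : nonemptyIndicator S = 1 :=
  if_pos h

lemma nonemptyIndicator_empty : nonemptyIndicator (∅ : Finset α) = 0 := if_neg (by simp)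

lemma nonemptyIndicator_nonneg (S : Finset α) : 0 ≤ nonemptyIndicator S := by
  unfold nonemptyIndicator
  split_ifs <;> norm_num

lemma sum_weight_le_mul_nonemptyIndicator {S T : Finset α} {weight : α → ℝ} {c : ℝ}
    (hc : 0 ≤ c) (hTS : T ⊆ S) (hT : ∑ A ∈ T, weight A ≤ c) :
    ∑ A ∈ T, weight A ≤ c * nonemptyIndicator S := by
  rcases T.eq_empty_or_nonempty with rfl | hne
  · simpa using mul_nonneg hc (nonemptyIndicator_nonneg S)
  · rwa [nonemptyIndicator_of_nonempty (hne.mono hTS), mul_one]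

lemma sum_chainTerm_indicator {ι : Type*} {K : Finset ι} {P Q : ι → Prop} [DecidablePred P]
    [DecidablePred Q] {c l I J a b : ℝ} (hP : (#{f ∈ K | P f} : ℝ) = #K * a)
    (hQ : (#{f ∈ K | Q f} : ℝ) = #K * b)
    (hPQ : (#{f ∈ K | P f ∧ Q f} : ℝ) = #K * (a * b)) :
    ∑ f ∈ K, chainTerm c l I J (if P f then 1 else 0) (if Q f then 1 else 0) =
      #K * chainTerm c l I J a b := by
  have haffine (a b : ℝ) : chainTerm c l I J a b =
      (l - (1 - 2 * c) - c * l * (I + J)) * (a * b) + (1 - 2 * c + c * l * J) * a +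
        (1 - 2 * c + c * l * I) * b - (1 - 2 * c) := by
    unfold chainTerm
    ring
  have hmul (f : ι) : (if P f then (1 : ℝ) else 0) * (if Q f then 1 else 0) =
      if P f ∧ Q f then 1 else 0 := by
    rw [ite_and, ite_mul, one_mul, zero_mul]
  simp only [haffine, hmul, sum_sub_distrib, sum_add_distrib, ← mul_sum, sum_boole, sum_const,
    nsmul_eq_mul, hP, hQ, hPQ]
  ring

variable [PartialOrder α] {N : Finset α} {weight I J : α → ℝ} {c s t : ℝ} {m M : α}

lemma membersBelow_eq_empty (hm : IsLeast (N : Set α) m) : membersBelow N m = ∅ :=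
  eq_empty_of_forall_notMem fun _ ha ↦
    (hm.2 (mem_membersBelow.1 ha).1).not_gt (mem_membersBelow.1 ha).2

lemma membersAbove_eq_empty (hM : IsGreatest (N : Set α) M) : membersAbove N M = ∅ :=
  eq_empty_of_forall_notMem fun _ ha ↦
    (hM.2 (mem_membersAbove.1 ha).1).not_gt (mem_membersAbove.1 ha).2

lemma membersBelow_nonempty {a : α} (hm : IsLeast (N : Set α) m) (ha : a ∈ N) (hne : a ≠ m) :
    (membersBelow N a).Nonempty :=
  ⟨m, mem_membersBelow.2 ⟨hm.1, (hm.2 ha).lt_of_ne hne.symm⟩⟩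

lemma membersAbove_nonempty {a : α} (hM : IsGreatest (N : Set α) M) (ha : a ∈ N) (hne : a ≠ M) :
    (membersAbove N a).Nonempty :=
  ⟨M, mem_membersAbove.2 ⟨hM.1, (hM.2 ha).lt_of_ne hne⟩⟩

/- The least and the greatest element of the chain pay for the `-2`, using
`l - 1 + s ≤ l * s` for the extra weights `s` and `t`. -/
lemma sum_weight_add_sub_two_le_sum_chainTerm_of_ne (hm : IsLeast (N : Set α) m)
    (hM : IsGreatest (N : Set α) M) (hmM : m ≠ M) (hweight : ∀ a ∈ N, 0 ≤ weight a ∧ weight a ≤ 1)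
    (hs : s ≤ 1) (ht : t ≤ 1) (hsI : s ≤ c * I m) (htJ : t ≤ c * J M) :
    ∑ a ∈ N, weight a + s + t - 2 ≤ ∑ a ∈ N, chainTerm c (weight a) (I a) (J a)
      (nonemptyIndicator (membersBelow N a)) (nonemptyIndicator (membersAbove N a)) := by
  classical
  have hMm : M ∈ N.erase m := mem_erase.2 ⟨hmM.symm, hM.1⟩
  have hleast : weight m - 1 + s ≤ chainTerm c (weight m) (I m) (J m)
      (nonemptyIndicator (membersBelow N m)) (nonemptyIndicator (membersAbove N m)) := by
    rw [membersBelow_eq_empty hm, nonemptyIndicator_empty,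
      nonemptyIndicator_of_nonempty (membersAbove_nonempty hM hm.1 hmM), chainTerm]
    obtain ⟨h0, h1⟩ := hweight m hm.1
    nlinarith [mul_nonneg (sub_nonneg.2 h1) (sub_nonneg.2 hs),
      mul_le_mul_of_nonneg_left hsI h0]
  have hgreatest : weight M - 1 + t ≤ chainTerm c (weight M) (I M) (J M)
      (nonemptyIndicator (membersBelow N M)) (nonemptyIndicator (membersAbove N M)) := by
    rw [membersAbove_eq_empty hM, nonemptyIndicator_empty,
      nonemptyIndicator_of_nonempty (membersBelow_nonempty hm hM.1 hmM.symm), chainTerm]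
    obtain ⟨h0, h1⟩ := hweight M hM.1
    nlinarith [mul_nonneg (sub_nonneg.2 h1) (sub_nonneg.2 ht),
      mul_le_mul_of_nonneg_left htJ h0]
  have hinterior : ∑ a ∈ (N.erase m).erase M, weight a =
      ∑ a ∈ (N.erase m).erase M, chainTerm c (weight a) (I a) (J a)
        (nonemptyIndicator (membersBelow N a)) (nonemptyIndicator (membersAbove N a)) := by
    refine sum_congr rfl fun a ha ↦ ?_
    obtain ⟨haM, ham, haN⟩ : a ≠ M ∧ a ≠ m ∧ a ∈ N := by simpa using ha
    rw [nonemptyIndicator_of_nonempty (membersBelow_nonempty hm haN ham),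
      nonemptyIndicator_of_nonempty (membersAbove_nonempty hM haN haM), chainTerm]
    ring
  rw [← add_sum_erase N _ hm.1, ← add_sum_erase _ _ hMm, ← add_sum_erase N _ hm.1,
    ← add_sum_erase _ _ hMm]
  linarith

lemma sum_weight_add_sub_two_le_sum_chainTerm (hN : IsChain (· ≤ ·) (N : Set α))
    (hweight : ∀ a ∈ N, 0 ≤ weight a ∧ weight a ≤ 1) (hc : c ≤ 1) (hs : s ≤ c) (ht : t ≤ c)
    (hsI : ∀ a ∈ N, s ≤ c * I a) (htJ : ∀ a ∈ N, t ≤ c * J a) :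
    ∑ a ∈ N, weight a + s + t - 2 ≤ ∑ a ∈ N, chainTerm c (weight a) (I a) (J a)
      (nonemptyIndicator (membersBelow N a)) (nonemptyIndicator (membersAbove N a)) := by
  rcases N.eq_empty_or_nonempty with rfl | hne
  · simp only [sum_empty]
    linarith
  obtain ⟨m, hm⟩ : ∃ m, IsLeast (N : Set α) m :=
    (N.exists_minimal hne).imp fun _ ↦
      (IsChain.directedOn (r := (· ≥ ·)) hN.symm).minimal_iff_isLeast.1
  obtain ⟨M, hM⟩ : ∃ M, IsGreatest (N : Set α) M :=
    (N.exists_maximal hne).imp fun _ ↦ hN.directedOn.maximal_iff_isGreatest.1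
  by_cases hmM : m = M
  · subst hmM
    obtain rfl : N = {m} := eq_singleton_iff_unique_mem.2
      ⟨hm.1, fun a ha ↦ (hM.2 ha).antisymm (hm.2 ha)⟩
    rw [sum_singleton, sum_singleton, membersBelow_eq_empty hm, membersAbove_eq_empty hM,
      nonemptyIndicator_empty, chainTerm]
    linarith [(hweight m (mem_singleton_self m)).2]
  · exact sum_weight_add_sub_two_le_sum_chainTerm_of_ne hm hM hmM hweight (hs.trans hc)
      (ht.trans hc) (hsI m hm.1) (htJ M hM.1)

end ChainInequality

section Averaging

variable {X : Type*} [Fintype X] {F : Finset (Finset X)} {weight : Finset X → ℝ} {c a b : ℝ}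
  {f : Numbering X}

lemma ssubset_of_isPrefix_of_card_lt {A B : Finset X} (hA : f.IsPrefix A) (hB : f.IsPrefix B)
    (h : #A < #B) : A ⊂ B :=
  ssubset_of_subset_of_ne (hA.subset_of_card_le_card hB h.le) fun heq ↦ h.ne (heq ▸ rfl)

variable [DecidableEq X]

lemma isChain_filter_isPrefix (F : Finset (Finset X)) (f : Numbering X) :
    IsChain (· ≤ ·) (({B ∈ F | f.IsPrefix B} : Finset (Finset X)) : Set (Finset X)) := by
  intro A hA B hB _
  exact (le_total #A #B).imp
    (fun h ↦ (mem_filter.1 hA).2.subset_of_card_le_card (mem_filter.1 hB).2 h)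
    (fun h ↦ (mem_filter.1 hB).2.subset_of_card_le_card (mem_filter.1 hA).2 h)

lemma nonemptyIndicator_membersBelow_filter (G : Finset (Finset X)) (B : Finset X)
    (f : Numbering X) : nonemptyIndicator (membersBelow {A ∈ G | f.IsPrefix A} B) =
      if ∃ A ∈ membersBelow G B, f.IsPrefix A then 1 else 0 := by
  refine if_congr ?_ rfl rfl
  simp only [Finset.Nonempty, mem_membersBelow, mem_filter, and_right_comm]

lemma nonemptyIndicator_membersAbove_filter (G : Finset (Finset X)) (B : Finset X)
    (f : Numbering X) : nonemptyIndicator (membersAbove {A ∈ G | f.IsPrefix A} B) =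
      if ∃ A ∈ membersAbove G B, f.IsPrefix A then 1 else 0 := by
  refine if_congr ?_ rfl rfl
  simp only [Finset.Nonempty, mem_membersAbove, mem_filter, and_right_comm]

/-- The members of `F` whose size lies in the interval `[a, b]`. -/
noncomputable def middleLevels (F : Finset (Finset X)) (a b : ℝ) : Finset (Finset X) :=
  {B ∈ F | a ≤ #B ∧ #B ≤ b}

lemma sum_filter_isPrefix_eq (hab : a ≤ b) :
    ∑ B ∈ F with f.IsPrefix B, weight B =
      ∑ B ∈ middleLevels F a b with f.IsPrefix B, weight B +
        ∑ B ∈ F with f.IsPrefix B ∧ #B < a, weight B +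
        ∑ B ∈ F with f.IsPrefix B ∧ b < #B, weight B := by
  simp only [middleLevels, sum_filter, ← sum_add_distrib]
  refine sum_congr rfl fun B _ ↦ ?_
  split_ifs <;> grind

lemma sum_sub_two_le_sum_chainTerm_of_numbering
    (hweight : ∀ B, 0 ≤ weight B ∧ weight B ≤ 1) (hc : 0 ≤ c) (hc1 : c ≤ 1) (hab : a ≤ b)
    (hlow : ∑ B ∈ F with f.IsPrefix B ∧ #B < a, weight B ≤ c)
    (hhigh : ∑ B ∈ F with f.IsPrefix B ∧ b < #B, weight B ≤ c) :
    ∑ B ∈ F with f.IsPrefix B, weight B - 2 ≤ ∑ B ∈ middleLevels F a b with f.IsPrefix B,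
      chainTerm c (weight B) (nonemptyIndicator (membersBelow F B))
        (nonemptyIndicator (membersAbove F B))
        (if ∃ A ∈ membersBelow (middleLevels F a b) B, f.IsPrefix A then 1 else 0)
        (if ∃ A ∈ membersAbove (middleLevels F a b) B, f.IsPrefix A then 1 else 0) := by
  let N : Finset (Finset X) := {B ∈ middleLevels F a b | f.IsPrefix B}
  have hmem {B : Finset X} (hB : B ∈ N) : f.IsPrefix B ∧ a ≤ #B ∧ #B ≤ b :=
    ⟨(mem_filter.1 hB).2, (mem_filter.1 (mem_filter.1 hB).1).2⟩
  have hbelow : ∀ B ∈ N, ∑ A ∈ F with f.IsPrefix A ∧ #A < a, weight A ≤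
      c * nonemptyIndicator (membersBelow F B) := by
    refine fun B hB ↦ sum_weight_le_mul_nonemptyIndicator hc (fun A hA ↦ ?_) hlow
    obtain ⟨hAF, hfA, hAa⟩ := mem_filter.1 hA
    exact mem_membersBelow.2 ⟨hAF, ssubset_of_isPrefix_of_card_lt hfA (hmem hB).1
      (mod_cast hAa.trans_le (hmem hB).2.1)⟩
  have habove : ∀ B ∈ N, ∑ A ∈ F with f.IsPrefix A ∧ b < #A, weight A ≤
      c * nonemptyIndicator (membersAbove F B) := by
    refine fun B hB ↦ sum_weight_le_mul_nonemptyIndicator hc (fun A hA ↦ ?_) hhigh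
    obtain ⟨hAF, hfA, hbA⟩ := mem_filter.1 hA
    exact mem_membersAbove.2 ⟨hAF, ssubset_of_isPrefix_of_card_lt (hmem hB).1 hfA
      (mod_cast (hmem hB).2.2.trans_lt hbA)⟩
  simp only [← nonemptyIndicator_membersBelow_filter, ← nonemptyIndicator_membersAbove_filter]
  rw [sum_filter_isPrefix_eq hab]
  exact sum_weight_add_sub_two_le_sum_chainTerm (isChain_filter_isPrefix _ f)
    (fun B _ ↦ hweight B) hc1 hlow hhigh hbelow habove

theorem sum_weight_mul_card_prefixed_sub_le
    (hweight : ∀ B, 0 ≤ weight B ∧ weight B ≤ 1) (hc : 0 ≤ c) (hc1 : c ≤ 1) (hab : a ≤ b)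
    (hlow : ∀ f : Numbering X, ∑ B ∈ F with f.IsPrefix B ∧ #B < a, weight B ≤ c)
    (hhigh : ∀ f : Numbering X, ∑ B ∈ F with f.IsPrefix B ∧ b < #B, weight B ≤ c) :
    ∑ B ∈ F, weight B * #(prefixed B) - 2 * (Fintype.card X)! ≤
      ∑ B ∈ middleLevels F a b, #(prefixed B) *
        chainTerm c (weight B) (nonemptyIndicator (membersBelow F B))
          (nonemptyIndicator (membersAbove F B))
          (crossingDensity (membersBelow (middleLevels F a b) B) B)
          (crossingDensity (membersAbove (middleLevels F a b) B) B) := by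
  have hswap (G : Finset (Finset X)) (g : Numbering X → Finset X → ℝ) :
      ∑ f, ∑ B ∈ G with f.IsPrefix B, g f B = ∑ B ∈ G, ∑ f ∈ prefixed B, g f B :=
    sum_comm' (by simp [and_comm])
  calc ∑ B ∈ F, weight B * #(prefixed B) - 2 * (Fintype.card X)!
    _ = ∑ f : Numbering X, (∑ B ∈ F with f.IsPrefix B, weight B - 2) := by
        rw [sum_sub_distrib, hswap F fun _ ↦ weight]
        simp [mul_comm]
    _ ≤ _ := sum_le_sum fun f _ ↦ sum_sub_two_le_sum_chainTerm_of_numbering hweight hc hc1 hab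
        (hlow f) (hhigh f)
    _ = _ := by
        rw [hswap]
        refine sum_congr rfl fun B _ ↦ sum_chainTerm_indicator card_filter_exists_isPrefix
          card_filter_exists_isPrefix (card_filter_exists_isPrefix_and ?_ ?_)
        · exact fun A hA ↦ (mem_membersBelow.1 hA).2.le
        · exact fun A hA ↦ (mem_membersAbove.1 hA).2.le

end Averaging

/-! ### The contribution of a single set -/

section SingleSet

lemma nonemptyIndicator_mul_le {α β : Type*} {S : Finset α} {T : Finset β} {p x : ℝ}
    (hp : 2 ≤ p) (hx : x ≤ 1) (hpx : p * x ≤ #S) :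
    nonemptyIndicator T * x ≤ 1 - x + #T * ((#S).choose 2 : ℝ) := by
  have hpos : (0 : ℝ) ≤ #T * ((#S).choose 2 : ℝ) := by positivity
  rcases T.eq_empty_or_nonempty with rfl | hT
  · rw [nonemptyIndicator_empty]
    linarith
  rw [nonemptyIndicator_of_nonempty hT, one_mul]
  rcases le_or_gt #S 1 with hS | hS
  · have hS' : (#S : ℝ) ≤ 1 := mod_cast hS
    nlinarith
  · have : (1 : ℝ) ≤ #T * ((#S).choose 2 : ℝ) :=
      mod_cast Nat.one_le_iff_ne_zero.2 (mul_pos (card_pos.2 hT) (Nat.choose_pos hS)).ne'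
    linarith

lemma mul_chainTerm_le {c l v w I J a b S R : ℝ} (hc : 0 ≤ c) (hc4 : 4 * c ≤ 1) (hl : 0 ≤ l)
    (hl1 : l ≤ 1) (hvl : v * l ≤ 1) (hw : 0 ≤ w) (hwv : w ≤ v) (ha : 0 ≤ a) (ha1 : a ≤ 1)
    (hb : 0 ≤ b) (hb1 : b ≤ 1) (hS : 0 ≤ S) (hR : 0 ≤ R) (hI : I * b ≤ 1 - b + S)
    (hJ : J * a ≤ 1 - a + R) :
    v * chainTerm c l I J a b ≤
      a * b - w * (1 - 4 * c) * ((1 - a) * (1 - b)) + c * (S + R) := by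
  have hv : 0 ≤ v := hw.trans hwv
  have hvl0 : 0 ≤ v * l := mul_nonneg hv hl
  have hdouble : 0 ≤ (1 - a) * (1 - b) := mul_nonneg (by linarith) (by linarith)
  have hends : I * ((1 - a) * b) + J * (a * (1 - b)) ≤ 2 * ((1 - a) * (1 - b)) + (S + R) := by
    nlinarith [mul_le_mul_of_nonneg_left hI (sub_nonneg.2 ha1),
      mul_le_mul_of_nonneg_left hJ (sub_nonneg.2 hb1), mul_nonneg ha hS, mul_nonneg hb hR]
  have hinterior : v * l * (a * b) ≤ a * b := mul_le_of_le_one_left (mul_nonneg ha hb) hvl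
  have hsingle : w * (1 - 4 * c) * ((1 - a) * (1 - b)) ≤
      v * (1 - 4 * c) * ((1 - a) * (1 - b)) := by
    gcongr
  have hextra : v * l * (2 * ((1 - a) * (1 - b)) + (S + R)) ≤
      v * (2 * ((1 - a) * (1 - b))) + (S + R) := by
    have h1 : v * l * (2 * ((1 - a) * (1 - b))) ≤ v * (2 * ((1 - a) * (1 - b))) :=
      mul_le_mul_of_nonneg_right (mul_le_of_le_one_right hv hl1) (by linarith)
    have h2 : v * l * (S + R) ≤ S + R := mul_le_of_le_one_left (add_nonneg hS hR) hvl
    linarith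
  calc v * chainTerm c l I J a b
    _ = v * l * (a * b) - v * (1 - 2 * c) * ((1 - a) * (1 - b)) +
          c * (v * l * (I * ((1 - a) * b) + J * (a * (1 - b)))) := by
        unfold chainTerm
        ring
    _ ≤ a * b - v * (1 - 2 * c) * ((1 - a) * (1 - b)) +
          c * (v * (2 * ((1 - a) * (1 - b))) + (S + R)) := by
        gcongr
        exact (mul_le_mul_of_nonneg_left hends hvl0).trans hextra
    _ = a * b - v * (1 - 4 * c) * ((1 - a) * (1 - b)) + c * (S + R) := by ring
    _ ≤ _ := by linarith

lemma mul_sub_le_two_mul_choose_two {z t : ℝ} {k : ℕ} (hz : 0 ≤ z) (ht : 0 ≤ t) (h : z - t ≤ k) :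
    z * (z - 2 * t - 1) ≤ 2 * (k.choose 2 : ℝ) := by
  rw [Nat.cast_choose_two, mul_div_cancel₀ _ two_ne_zero]
  rcases k.eq_zero_or_pos with rfl | hk
  · rw [Nat.cast_zero] at h ⊢
    nlinarith
  · have hk1 : (1 : ℝ) ≤ k := mod_cast hk
    rcases le_total (z - t) 1 with hzt | hzt <;> nlinarith

lemma le_add_of_mul_sub_pos {a b s : ℝ} (ha : 0 ≤ a) (ha1 : a ≤ 1) (hb : 0 ≤ b) (hs1 : s ≤ 1)
    (h : 0 < a * b - s * ((1 - a) * (1 - b))) : s ≤ a + b := by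
  nlinarith [mul_nonneg ha hb, mul_nonneg (sub_nonneg.2 hs1) (add_nonneg ha hb),
    mul_le_of_le_one_left hb ha1, mul_nonneg (sub_nonneg.2 hs1) ha,
    mul_le_mul_of_nonneg_left (mul_le_of_le_one_left hb ha1) (sub_nonneg.2 hs1)]

variable {d u k : ℕ} {n μ θ p q s a b : ℝ}

lemma mul_two_div_sub_one_le {e : ℝ} (hθ : 0 ≤ θ) (hq : 3 ≤ q) (he : e ≤ θ * q ^ 2) :
    e * (2 / (q - 1)) ≤ 3 * θ * q := by
  rw [mul_div_assoc', div_le_iff₀ (by linarith)]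
  nlinarith [mul_nonneg (mul_nonneg hθ (by linarith : 0 ≤ q)) (sub_nonneg.2 hq)]

lemma mul_le_of_few_noncovering (hμ : 0 ≤ μ) (hθ : 0 ≤ θ) (hp : μ ≤ p) (hq : μ ≤ q) (hq3 : 3 ≤ q)
    (hqn : q ≤ n) (ha : 0 ≤ a) (hb : 0 ≤ b) (hs : s ≤ a + b) (hpa : p * a ≤ d)
    (hqb : q * b ≤ k + (u - k) * (2 / (q - 1))) (hku : k ≤ u)
    (hfew : (u - k : ℝ) ≤ θ * q ^ 2) (hbracket : 0 ≤ μ * s - 6 * θ * n - 2) :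
    a * b * (μ ^ 2 * (μ * s - 6 * θ * n - 2)) ≤
      2 * (d * (k.choose 2 : ℝ) + (d.choose 2 : ℝ) * u) := by
  set t : ℝ := (u - k) * (2 / (q - 1))
  have hnoncov : (0 : ℝ) ≤ u - k := sub_nonneg.2 (mod_cast hku)
  have ht : 0 ≤ t := mul_nonneg hnoncov (div_nonneg zero_le_two (by linarith))
  have htn : t ≤ 3 * θ * n := (mul_two_div_sub_one_le hθ hq3 hfew).trans (by gcongr)
  have hu : q * b ≤ u := hqb.trans <| by
    have := mul_le_mul_of_nonneg_left (two_div_sub_one_le_one hq3) hnoncov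
    linarith
  have hpa0 : 0 ≤ p * a := mul_nonneg (hμ.trans hp) ha
  have hqb0 : 0 ≤ q * b := mul_nonneg (hμ.trans hq) hb
  have hcov : p * a * (q * b * (q * b - 2 * t - 1)) ≤ 2 * (d * (k.choose 2 : ℝ)) := by
    have := mul_sub_le_two_mul_choose_two hqb0 ht (sub_le_iff_le_add.2 hqb)
    calc p * a * (q * b * (q * b - 2 * t - 1)) ≤ p * a * (2 * (k.choose 2 : ℝ)) := by gcongr
      _ ≤ d * (2 * (k.choose 2 : ℝ)) := by gcongr
      _ = _ := by ring
  have hbelow : p * a * (p * a - 1) * (q * b) ≤ 2 * ((d.choose 2 : ℝ) * u) := by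
    have := mul_sub_le_two_mul_choose_two hpa0 le_rfl (by simpa using hpa)
    calc p * a * (p * a - 1) * (q * b) ≤ 2 * (d.choose 2 : ℝ) * (q * b) :=
          mul_le_mul_of_nonneg_right (by simpa using this) hqb0
      _ ≤ 2 * (d.choose 2 : ℝ) * u := by gcongr
      _ = _ := by ring
  have hsum : μ * s ≤ p * a + q * b := by
    nlinarith [mul_le_mul_of_nonneg_left hs hμ, mul_le_mul_of_nonneg_right hp ha,
      mul_le_mul_of_nonneg_right hq hb]
  calc a * b * (μ ^ 2 * (μ * s - 6 * θ * n - 2))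
    _ = μ * a * (μ * b) * (μ * s - 6 * θ * n - 2) := by ring
    _ ≤ p * a * (q * b) * (p * a + q * b - 2 * t - 2) := by
        have hprod : μ * a * (μ * b) ≤ p * a * (q * b) := by gcongr
        exact mul_le_mul hprod (by linarith) hbracket (mul_nonneg hpa0 hqb0)
    _ ≤ _ := by linarith

lemma mul_le_of_many_noncovering {y : ℝ} (hμ : 0 ≤ μ) (hp : μ ≤ p) (ha : 0 ≤ a) (hb1 : b ≤ 1)
    (hpa : p * a ≤ d) (hy : 1 ≤ y) (hyu : y ≤ u) :
    a * b * (μ * (y * (y - 1))) ≤ 2 * (d * (u.choose 2 : ℝ)) := by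
  have : 0 ≤ y * (y - 1) := mul_nonneg (by linarith) (by linarith)
  have hchoose : y * (y - 1) ≤ 2 * (u.choose 2 : ℝ) := by
    simpa using mul_sub_le_two_mul_choose_two (by linarith) le_rfl (by simpa using hyu)
  calc a * b * (μ * (y * (y - 1)))
    _ = b * (μ * a * (y * (y - 1))) := by ring
    _ ≤ μ * a * (y * (y - 1)) := mul_le_of_le_one_left (by positivity) hb1
    _ ≤ d * (2 * (u.choose 2 : ℝ)) := by
        gcongr
        exact (mul_le_mul_of_nonneg_right hp ha).trans hpa
    _ = _ := by ring

end SingleSet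

section Parameters

variable {n x s : ℝ}

lemma parameter_inequality_few (hx : 0 < x) (hx1 : x ≤ 1 / 100) (hn : 1 ≤ x ^ 2 * n)
    (hs : 1 - x ≤ s) :
    (n + 1) ^ 3 / 16 ≤ (1 + 100 * x) * ((n * (1 / 2 - 2 * x)) ^ 2 *
      (n * (1 / 2 - 2 * x) * s - 6 * x * n - 2)) / 2 := by
  have hn0 : 0 < n := pos_of_mul_pos_right (by linarith) (sq_nonneg x)
  have hcube : (n + 1) ^ 3 ≤ (n * (1 + x)) ^ 3 := by
    gcongr
    nlinarith
  have hbracket : n * ((1 - 18 * x) / 2) ≤ n * (1 / 2 - 2 * x) * s - 6 * x * n - 2 := by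
    have hfactor : 0 ≤ n * (1 / 2 - 2 * x) := mul_nonneg hn0.le (by linarith)
    nlinarith [mul_le_mul_of_nonneg_left hs hfactor, mul_nonneg hn0.le hx.le]
  have hpoly : (1 + x) ^ 3 ≤ (1 + 100 * x) * ((1 - 4 * x) ^ 2 * (1 - 18 * x)) := by
    nlinarith [mul_nonneg hx.le (sub_nonneg.2 hx1), mul_nonneg (sq_nonneg x) (sub_nonneg.2 hx1),
      mul_nonneg (pow_nonneg hx.le 3) (sub_nonneg.2 hx1), pow_nonneg hx.le 3]
  calc (n + 1) ^ 3 / 16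
    _ ≤ n ^ 3 * (1 + x) ^ 3 / 16 := by linarith [mul_pow n (1 + x) 3]
    _ ≤ n ^ 3 * ((1 + 100 * x) * ((1 - 4 * x) ^ 2 * (1 - 18 * x))) / 16 := by gcongr
    _ = (1 + 100 * x) * ((n * (1 / 2 - 2 * x)) ^ 2 * (n * ((1 - 18 * x) / 2))) / 2 := by ring
    _ ≤ _ := by gcongr

lemma parameter_inequality_many (hx : 0 < x) (hx1 : x ≤ 1 / 100) (hn : 1 ≤ x ^ 2 * n) :
    (n + 1) ^ 3 / 16 ≤ 100 * x * (n * (1 / 2 - 2 * x) * (x * (n * (1 / 2 - 2 * x)) ^ 2 *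
      (x * (n * (1 / 2 - 2 * x)) ^ 2 - 1))) / 2 := by
  have hn0 : 0 < n := pos_of_mul_pos_right (by linarith) (sq_nonneg x)
  have hxn : 100 ≤ x * n := by nlinarith
  have hnx : 10000 ≤ n := by nlinarith
  have hμ : n * (2 / 5) ≤ n * (1 / 2 - 2 * x) := by
    gcongr
    linarith
  have hy : n / 10 * (x * n) ≤ x * (n * (1 / 2 - 2 * x)) ^ 2 := by
    have : (n * (2 / 5)) ^ 2 ≤ (n * (1 / 2 - 2 * x)) ^ 2 := by gcongr
    nlinarith [mul_le_mul_of_nonneg_left this hx.le, mul_nonneg hx.le (sq_nonneg n)]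
  set μ := n * (1 / 2 - 2 * x)
  have hμ0 : 0 ≤ μ := hμ.trans' (by positivity)
  set y := x * μ ^ 2
  have hy1 : n ≤ y - 1 := by nlinarith
  have hn3 : n ^ 3 ≤ x ^ 2 * n * n ^ 3 := le_mul_of_one_le_left (by positivity) hn
  calc (n + 1) ^ 3 / 16
    _ ≤ (2 * n) ^ 3 / 16 := by
        gcongr
        linarith
    _ ≤ 100 * x * (n * (2 / 5) * (n / 10 * (x * n) * n)) / 2 := by linarith [pow_pos hn0 3]
    _ ≤ _ := by gcongr

end Parameters

lemma fB_le (n : ℕ) : (fB n : ℝ) ≤ ((n : ℝ) + 1) ^ 3 / 16 := by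
  have hhalf : (((n + 1) / 2 : ℕ) : ℝ) ≤ (n + 1) / 2 := by
    simpa using Nat.cast_div_le (α := ℝ) (m := n + 1) (n := 2)
  set k := (n + 1) / 2 with hk
  calc (fB n : ℝ) = (k + 1) * (k * (k - 1) / 2) := by
        rw [fB, ← hk, Nat.cast_mul, Nat.cast_choose_two]
        push_cast
        rfl
    _ ≤ (k : ℝ) ^ 3 / 2 := by nlinarith [(Nat.cast_nonneg k : (0 : ℝ) ≤ k)]
    _ ≤ ((n + 1) / 2) ^ 3 / 2 := by gcongr
    _ = ((n : ℝ) + 1) ^ 3 / 16 := by ring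

section Combined

variable {n d u k : ℕ} {x s p q a b : ℝ}

lemma mul_cube_le_of_few_noncovering (hx : 0 < x) (hx1 : x ≤ 1 / 100) (hn : 1 ≤ x ^ 2 * n)
    (hs : 1 - x ≤ s) (hp : n * (1 / 2 - 2 * x) ≤ p) (hq : n * (1 / 2 - 2 * x) ≤ q) (hqn : q ≤ n)
    (ha : 0 ≤ a) (hb : 0 ≤ b) (hsab : s ≤ a + b) (hpa : p * a ≤ d)
    (hqb : q * b ≤ k + (u - k) * (2 / (q - 1))) (hku : k ≤ u)
    (hfew : (u - k : ℝ) ≤ x * q ^ 2) :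
    a * b * ((n + 1 : ℝ) ^ 3 / 16) ≤
      (1 + 100 * x) * (d * (k.choose 2 : ℝ) + (d.choose 2 : ℝ) * u) := by
  have hnx : (10000 : ℝ) ≤ n := by nlinarith
  have hμ : (n : ℝ) * (2 / 5) ≤ n * (1 / 2 - 2 * x) := by gcongr; linarith
  have hparam := parameter_inequality_few hx hx1 hn hs
  set μ : ℝ := n * (1 / 2 - 2 * x)
  have hμ0 : 0 ≤ μ := by linarith
  have hbracket : 0 ≤ μ * s - 6 * x * n - 2 := by nlinarith
  have hcount := mul_le_of_few_noncovering hμ0 hx.le hp hq (by linarith) hqn ha hb hsab hpa hqb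
    hku hfew hbracket
  calc a * b * ((n + 1 : ℝ) ^ 3 / 16)
    _ ≤ a * b * ((1 + 100 * x) * (μ ^ 2 * (μ * s - 6 * x * n - 2)) / 2) := by gcongr
    _ = (1 + 100 * x) * (a * b * (μ ^ 2 * (μ * s - 6 * x * n - 2))) / 2 := by ring
    _ ≤ (1 + 100 * x) * (2 * (d * (k.choose 2 : ℝ) + (d.choose 2 : ℝ) * u)) / 2 := by gcongr
    _ = _ := by ring

lemma mul_cube_le_of_many_noncovering (hx : 0 < x) (hx1 : x ≤ 1 / 100) (hn : 1 ≤ x ^ 2 * n)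
    (hp : n * (1 / 2 - 2 * x) ≤ p) (hq : n * (1 / 2 - 2 * x) ≤ q) (ha : 0 ≤ a) (hb : 0 ≤ b)
    (hb1 : b ≤ 1) (hpa : p * a ≤ d) (hmany : x * q ^ 2 ≤ u) :
    a * b * ((n + 1 : ℝ) ^ 3 / 16) ≤ 100 * x * (d * (u.choose 2 : ℝ)) := by
  have hxn : 100 ≤ x * n := by nlinarith
  have hμ : (n : ℝ) * (2 / 5) ≤ n * (1 / 2 - 2 * x) := by gcongr; linarith
  have hparam := parameter_inequality_many hx hx1 hn
  set μ : ℝ := n * (1 / 2 - 2 * x)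
  have hμ40 : 40 ≤ μ := by nlinarith
  have hy : 1 ≤ x * μ ^ 2 := by nlinarith [mul_le_mul_of_nonneg_left hμ hx.le]
  have hyu : x * μ ^ 2 ≤ u := hmany.trans' (by gcongr)
  have hcount := mul_le_of_many_noncovering (by linarith) hp ha hb1 hpa hy hyu
  calc a * b * ((n + 1 : ℝ) ^ 3 / 16)
    _ ≤ a * b * (100 * x * (μ * (x * μ ^ 2 * (x * μ ^ 2 - 1))) / 2) := by gcongr
    _ = 100 * x * (a * b * (μ * (x * μ ^ 2 * (x * μ ^ 2 - 1)))) / 2 := by ring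
    _ ≤ 100 * x * (2 * (d * (u.choose 2 : ℝ))) / 2 := by gcongr
    _ = _ := by ring

/- If few sets above `B` fail to cover it, the butterflies counted with covering sets suffice;
otherwise the much more numerous butterflies counted with all sets above `B` do. -/
lemma mul_fB_le (hx : 0 < x) (hx1 : x ≤ 1 / 100) (hn : 1 ≤ x ^ 2 * n) (hs : 1 - x ≤ s)
    (hs1 : s ≤ 1) (hp : n * (1 / 2 - 2 * x) ≤ p) (hq : n * (1 / 2 - 2 * x) ≤ q) (hqn : q ≤ n)
    (ha : 0 ≤ a) (ha1 : a ≤ 1) (hb : 0 ≤ b) (hb1 : b ≤ 1) (hpa : p * a ≤ d)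
    (hqb : q * b ≤ k + (u - k) * (2 / (q - 1))) (hku : k ≤ u) :
    (a * b - s * ((1 - a) * (1 - b))) * fB n ≤
      (1 + 100 * x) * (d * (k.choose 2 : ℝ) + (d.choose 2 : ℝ) * u) +
        100 * x * (d * (u.choose 2 : ℝ)) := by
  have hcov : 0 ≤ (1 + 100 * x) * (d * (k.choose 2 : ℝ) + (d.choose 2 : ℝ) * u) := by positivity
  have habove : 0 ≤ 100 * x * (d * (u.choose 2 : ℝ)) := by positivity
  rcases le_or_gt (a * b - s * ((1 - a) * (1 - b))) 0 with hneg | hpos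
  · exact (mul_nonpos_of_nonpos_of_nonneg hneg (by positivity)).trans (add_nonneg hcov habove)
  have hsingle : 0 ≤ s * ((1 - a) * (1 - b)) :=
    mul_nonneg (by linarith) (mul_nonneg (by linarith) (by linarith))
  refine (mul_le_mul (by linarith) (fB_le n) (by positivity) (mul_nonneg ha hb)).trans ?_
  rcases le_or_gt (u - k : ℝ) (x * q ^ 2) with hfew | hmany
  · have := mul_cube_le_of_few_noncovering hx hx1 hn hs hp hq hqn ha hb
      (le_add_of_mul_sub_pos ha ha1 hb hs1 hpos) hpa hqb hku hfew
    linarith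
  · have := mul_cube_le_of_many_noncovering (u := u) hx hx1 hn hp hq ha hb hb1 hpa
      (by linarith [(Nat.cast_nonneg k : (0 : ℝ) ≤ k)])
    linarith

end Combined

/-! ### Binomial coefficients near and far from the middle -/

section Binomials

open Filter Topology

variable {n j k r : ℕ} {y : ℝ}

lemma choose_le_choose_half_succ (hj : j ≠ n / 2) : n.choose j ≤ n.choose (n / 2 + 1) := by
  rcases Nat.lt_or_ge n j with hnj | hjn
  · simp [Nat.choose_eq_zero_of_lt hnj]
  rw [← Nat.choose_symm (by omega : n / 2 + 1 ≤ n)]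
  rcases hj.lt_or_gt with hlt | hgt
  · exact choose_le_choose_of_le_half (by omega) (by omega)
  · rw [← Nat.choose_symm hjn]
    exact choose_le_choose_of_le_half (by omega) (by omega)

lemma choose_succ_mul_succ (hk : k ≤ n) :
    (n.choose (k + 1) : ℝ) * (k + 1) = n.choose k * (n - k) := by
  rw [← Nat.cast_sub hk]
  exact_mod_cast Nat.choose_succ_right_eq n k

lemma one_sub_two_div_mul_choose_half_le (hn : 0 < n) :
    (1 - 2 / n : ℝ) * n.choose (n / 2) ≤ n.choose (n / 2 + 1) := by
  have hn0 : (0 : ℝ) < n := mod_cast hn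
  have hlower : (n : ℝ) ≤ 2 * ((n / 2 : ℕ) + 1) := mod_cast (by omega : n ≤ 2 * (n / 2 + 1))
  have hupper : 2 * ((n / 2 : ℕ) : ℝ) ≤ n := mod_cast (by omega : 2 * (n / 2) ≤ n)
  have hfactor : (1 - 2 / n : ℝ) * ((n / 2 : ℕ) + 1) ≤ n - (n / 2 : ℕ) := by
    have : 1 ≤ 2 / (n : ℝ) * ((n / 2 : ℕ) + 1) := by
      rw [div_mul_eq_mul_div, le_div_iff₀ hn0]
      linarith
    linarith
  refine le_of_mul_le_mul_right ?_ (by positivity : (0 : ℝ) < (n / 2 : ℕ) + 1)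
  rw [choose_succ_mul_succ (Nat.div_le_self n 2), mul_right_comm, mul_comm]
  gcongr

lemma one_add_mul_choose_le_choose_succ (hk : k ≤ n) (h : (2 + y) * (k + 1) ≤ n + 1) :
    (1 + y) * n.choose k ≤ n.choose (k + 1) := by
  refine le_of_mul_le_mul_right ?_ (by positivity : (0 : ℝ) < k + 1)
  rw [choose_succ_mul_succ hk, mul_right_comm, mul_comm]
  gcongr
  linarith

lemma one_add_pow_mul_choose_le_choose_add (hy : 0 ≤ y) (hn : k + r ≤ n)
    (h : (2 + y) * (k + r) ≤ n + 1) : (1 + y) ^ r * n.choose k ≤ n.choose (k + r) := by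
  induction r with
  | zero => simp
  | succ r ih =>
    push_cast at h
    calc (1 + y) ^ (r + 1) * n.choose k = (1 + y) * ((1 + y) ^ r * n.choose k) := by ring
      _ ≤ (1 + y) * n.choose (k + r) := by
          gcongr
          exact ih (by omega) (by linarith)
      _ ≤ n.choose (k + r + 1) :=
          one_add_mul_choose_le_choose_succ (by omega) (by push_cast; linarith)

lemma eventually_pow_le_pow_floor {β t : ℝ} (hβ : 1 < β) (ht : 0 < t) (d : ℕ) :
    ∀ᶠ n : ℕ in atTop, ((n : ℝ) + 1) ^ d ≤ β ^ ⌊t * n⌋₊ := by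
  have hβ0 : 0 < β := one_pos.trans hβ
  have htend := (tendsto_pow_const_div_const_pow_of_one_lt d (Real.one_lt_rpow hβ ht)).comp
    (tendsto_add_atTop_nat 1)
  filter_upwards [htend.eventually (gt_mem_nhds (inv_pos.2 (Real.rpow_pos_of_pos hβ0 (t + 1))))]
    with n hn
  rw [Function.comp_apply, div_lt_iff₀ (by positivity), ← Real.rpow_natCast (β ^ t),
    ← Real.rpow_mul hβ0.le, ← Real.rpow_neg hβ0.le, ← Real.rpow_add hβ0] at hn
  calc ((n : ℝ) + 1) ^ d ≤ β ^ (-(t + 1) + t * (n + 1)) := mod_cast hn.le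
    _ ≤ β ^ (⌊t * n⌋₊ : ℝ) :=
        Real.rpow_le_rpow_of_exponent_le hβ.le (by linarith [Nat.lt_floor_add_one (t * n)])
    _ = β ^ ⌊t * n⌋₊ := Real.rpow_natCast _ _

lemma eventually_pow_mul_choose_le_choose_half_succ (hy : 0 < y) (d : ℕ) :
    ∀ᶠ n : ℕ in atTop, ∀ k : ℕ, (k : ℝ) ≤ n * (1 / 2 - y) →
      ((n : ℝ) + 1) ^ d * n.choose k ≤ n.choose (n / 2 + 1) := by
  have hlarge : ∀ᶠ n : ℕ in atTop, 1 < y * n :=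
    (tendsto_natCast_atTop_atTop.const_mul_atTop hy).eventually_gt_atTop 1
  filter_upwards [hlarge, eventually_pow_le_pow_floor (by linarith : 1 < 1 + y) (half_pos hy) d]
    with n hn hpow k hk
  set r := ⌊y / 2 * n⌋₊
  have hr : (r : ℝ) ≤ y / 2 * n := Nat.floor_le (by positivity)
  have hkr : 2 * ((k : ℝ) + r) ≤ n - y * n := by linarith
  have hkr_lt : 2 * (k + r) + 1 < n := by
    rify
    linarith
  have hgrowth : (1 + y) ^ r * n.choose k ≤ n.choose (k + r) := by
    refine one_add_pow_mul_choose_le_choose_add hy.le (by omega) ?_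
    nlinarith [mul_le_mul_of_nonneg_left hkr hy.le, mul_nonneg (sq_nonneg y) n.cast_nonneg]
  calc ((n : ℝ) + 1) ^ d * n.choose k ≤ (1 + y) ^ r * n.choose k := by gcongr
    _ ≤ n.choose (k + r) := hgrowth
    _ ≤ n.choose (n / 2 + 1) := mod_cast choose_le_choose_half_succ (by omega)

end Binomials

/-! ### Weighting the levels -/

section Weights

variable {n k : ℕ}

/-- The size of level `n / 2 + 1` of the `n`-cube, a second largest level, relative to the size of
level `k`. It is less than `1` at most for `k = n / 2`. -/
noncomputable def levelRatio (n k : ℕ) : ℝ := n.choose (n / 2 + 1) / n.choose k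

/-- The weight of a set of size `k` in the chain inequality. It is `1` on the two middle levels and
proportional to the size of the level elsewhere, which makes the levels far from the middle
negligible on every maximal chain. -/
noncomputable def levelWeight (n k : ℕ) : ℝ := min 1 (levelRatio n k)⁻¹

lemma levelRatio_pos (hn : 0 < n) (hk : k ≤ n) : 0 < levelRatio n k :=
  div_pos (mod_cast Nat.choose_pos (by omega)) (mod_cast Nat.choose_pos hk)

lemma levelWeight_nonneg (n k : ℕ) : 0 ≤ levelWeight n k :=
  le_min zero_le_one (inv_nonneg.2 (by unfold levelRatio; positivity))

lemma levelWeight_le_one (n k : ℕ) : levelWeight n k ≤ 1 := min_le_left _ _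

lemma levelRatio_mul_levelWeight (hn : 0 < n) (hk : k ≤ n) :
    levelRatio n k * levelWeight n k = min (levelRatio n k) 1 := by
  have hpos := levelRatio_pos hn hk
  rw [levelWeight, mul_min_of_nonneg _ _ hpos.le, mul_one, mul_inv_cancel₀ hpos.ne']

lemma one_le_levelRatio (hk : k ≤ n) (hne : k ≠ n / 2) : 1 ≤ levelRatio n k :=
  (one_le_div (mod_cast Nat.choose_pos hk)).2 (mod_cast choose_le_choose_half_succ hne)

lemma levelRatio_half_le (hk : k ≤ n) : levelRatio n (n / 2) ≤ levelRatio n k := by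
  have : (0 : ℝ) < n.choose k := mod_cast Nat.choose_pos hk
  unfold levelRatio
  gcongr
  exact Nat.choose_le_middle _ _

lemma levelRatio_half_le_one (n : ℕ) : levelRatio n (n / 2) ≤ 1 :=
  div_le_one_of_le₀ (mod_cast Nat.choose_le_middle _ _) (Nat.cast_nonneg _)

lemma one_sub_two_div_le_levelRatio_half (hn : 0 < n) : 1 - 2 / n ≤ levelRatio n (n / 2) := by
  rw [levelRatio, le_div_iff₀ (mod_cast Nat.choose_pos (Nat.div_le_self n 2))]
  exact one_sub_two_div_mul_choose_half_le hn

lemma choose_half_succ_mul_card_prefixed (B : Finset (Fin n)) :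
    (n.choose (n / 2 + 1) : ℝ) * #(prefixed B) = levelRatio n #B * n ! := by
  have hB : #B ≤ n := card_finset_fin_le B
  have hpos : (0 : ℝ) < n.choose #B := mod_cast Nat.choose_pos hB
  have hcount : (n.choose #B : ℝ) * #(prefixed B) = n ! := by
    rw [card_prefixed, Fintype.card_fin]
    exact_mod_cast (mul_assoc _ _ _).symm.trans (Nat.choose_mul_factorial_mul_factorial hB)
  rw [← hcount, levelRatio]
  field_simp

/- Every set counts fully except those of level `n / 2`; a full such level loses exactly the
difference of the two terms of `Sigma2 n`. -/
lemma two_mul_choose_add_excess_le_sum {E : ℕ} {F : Finset (Finset (Fin n))}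
    (hF : #F = Sigma2 n + E) :
    2 * (n.choose (n / 2 + 1) : ℝ) + E ≤ ∑ B ∈ F, min (levelRatio n #B) 1 := by
  set w := levelRatio n (n / 2) with hw
  have hlevel : (#{B ∈ F | #B = n / 2} : ℝ) ≤ n.choose (n / 2) := by
    have hsub : {B ∈ F | #B = n / 2} ⊆ powersetCard (n / 2) univ := fun B hB ↦
      mem_powersetCard_univ.2 (mem_filter.1 hB).2
    simpa using (Nat.cast_le (α := ℝ)).2 (card_le_card hsub)
  have hw_mul : w * n.choose (n / 2) = n.choose (n / 2 + 1) :=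
    div_mul_cancel₀ _ (mod_cast (Nat.choose_pos (Nat.div_le_self n 2)).ne')
  have hterm (B : Finset (Fin n)) :
      1 - (if #B = n / 2 then 1 - w else 0) ≤ min (levelRatio n #B) 1 := by
    split_ifs with hB
    · rw [hB, ← hw, min_eq_left (levelRatio_half_le_one n), sub_sub_cancel]
    · rw [min_eq_right (one_le_levelRatio (card_finset_fin_le B) hB), sub_zero]
  calc 2 * (n.choose (n / 2 + 1) : ℝ) + E
    _ = #F - n.choose (n / 2) * (1 - w) := by
        rw [hF, Sigma2]
        push_cast
        linarith
    _ ≤ #F - #{B ∈ F | #B = n / 2} * (1 - w) := by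
        have : w ≤ 1 := levelRatio_half_le_one n
        gcongr
    _ = ∑ B ∈ F, (1 - (if #B = n / 2 then 1 - w else 0)) := by
        rw [sum_sub_distrib, ← sum_filter, sum_const, sum_const, nsmul_eq_mul, nsmul_eq_mul,
          mul_one]
    _ ≤ _ := sum_le_sum fun B _ ↦ hterm B

lemma excess_mul_factorial_le {E : ℕ} {F : Finset (Finset (Fin n))} (hn : 0 < n)
    (hF : #F = Sigma2 n + E) :
    (E : ℝ) * n ! ≤
      n.choose (n / 2 + 1) * (∑ B ∈ F, levelWeight n #B * #(prefixed B) - 2 * n !) := by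
  have hterm (B : Finset (Fin n)) : (n.choose (n / 2 + 1) : ℝ) *
      (levelWeight n #B * #(prefixed B)) = min (levelRatio n #B) 1 * n ! := by
    rw [mul_left_comm, choose_half_succ_mul_card_prefixed, ← mul_assoc, mul_comm (levelWeight _ _),
      levelRatio_mul_levelWeight hn (card_finset_fin_le B)]
  rw [mul_sub, mul_sum, sum_congr rfl fun B _ ↦ hterm B, ← sum_mul]
  have := mul_le_mul_of_nonneg_right (two_mul_choose_add_excess_le_sum hF)
    (Nat.cast_nonneg (α := ℝ) n !)
  linarith

lemma card_le_succ_of_forall_isPrefix {f : Numbering (Fin n)} {S : Finset (Finset (Fin n))}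
    (hS : ∀ B ∈ S, f.IsPrefix B) : #S ≤ n + 1 := by
  rw [← card_range (n + 1)]
  refine card_le_card_of_injOn card (fun B _ ↦ ?_) fun A hA B hB hAB ↦ ?_
  · exact mem_coe.2 (mem_range.2 (Nat.lt_succ_of_le (card_finset_fin_le B)))
  · ext x
    rw [hS A hA x, hS B hB x, hAB]

lemma sum_levelWeight_le {f : Numbering (Fin n)} {S : Finset (Finset (Fin n))} (hn : 0 < n)
    (hS : ∀ B ∈ S, f.IsPrefix B)
    (hfar : ∀ B ∈ S, ((n : ℝ) + 1) ^ 5 * n.choose #B ≤ n.choose (n / 2 + 1)) :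
    ∑ B ∈ S, levelWeight n #B ≤ 1 / ((n : ℝ) + 1) ^ 4 := by
  have hM : (0 : ℝ) < n.choose (n / 2 + 1) := mod_cast Nat.choose_pos (by omega)
  have hcard : (#S : ℝ) ≤ n + 1 := mod_cast card_le_succ_of_forall_isPrefix hS
  have hterm (B) (hB : B ∈ S) : levelWeight n #B ≤ 1 / ((n : ℝ) + 1) ^ 5 := by
    refine (min_le_right _ _).trans ?_
    rw [levelRatio, inv_div, div_le_div_iff₀ hM (by positivity), one_mul, mul_comm]
    exact hfar B hB
  calc ∑ B ∈ S, levelWeight n #B ≤ #S * (1 / ((n : ℝ) + 1) ^ 5) := by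
        simpa using sum_le_card_nsmul S _ _ hterm
    _ ≤ (n + 1) * (1 / ((n : ℝ) + 1) ^ 5) := by gcongr
    _ = 1 / ((n : ℝ) + 1) ^ 4 := by field_simp

end Weights

/-! ### Counting butterflies -/

section Supersaturation

variable {n E : ℕ} {a b c x : ℝ} {F : Finset (Finset (Fin n))} {B : Finset (Fin n)}

/-- The proportion of the maximal chains through `B` that meet `F` below `B` on the levels between
`a` and `b`. -/
noncomputable def densityBelow (a b : ℝ) (F : Finset (Finset (Fin n))) (B : Finset (Fin n)) : ℝ :=
  crossingDensity (membersBelow (middleLevels F a b) B) B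

/-- The proportion of the maximal chains through `B` that meet `F` above `B` on the levels between
`a` and `b`. -/
noncomputable def densityAbove (a b : ℝ) (F : Finset (Finset (Fin n))) (B : Finset (Fin n)) : ℝ :=
  crossingDensity (membersAbove (middleLevels F a b) B) B

/-- The contribution of `B` to the chain inequality for `F` with the weights `levelWeight`, the
levels between `a` and `b` and the far weight `c`, averaged over the maximal chains through `B`. -/
noncomputable def averageChainTerm (c a b : ℝ) (F : Finset (Finset (Fin n)))
    (B : Finset (Fin n)) : ℝ :=
  chainTerm c (levelWeight n #B) (nonemptyIndicator (membersBelow F B))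
    (nonemptyIndicator (membersAbove F B)) (densityBelow a b F B) (densityAbove a b F B)

lemma excess_le_sum_levelRatio_mul_averageChainTerm (hn : 0 < n) (hc : 0 ≤ c)
    (hc1 : c ≤ 1) (hab : a ≤ b)
    (hlow : ∀ f : Numbering (Fin n), ∑ B ∈ F with f.IsPrefix B ∧ #B < a, levelWeight n #B ≤ c)
    (hhigh : ∀ f : Numbering (Fin n), ∑ B ∈ F with f.IsPrefix B ∧ b < #B, levelWeight n #B ≤ c)
    (hF : #F = Sigma2 n + E) :
    (E : ℝ) ≤ ∑ B ∈ middleLevels F a b, levelRatio n #B * averageChainTerm c a b F B := by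
  have hchain := sum_weight_mul_card_prefixed_sub_le
    (fun B ↦ ⟨levelWeight_nonneg n #B, levelWeight_le_one n #B⟩) hc hc1 hab hlow hhigh
  rw [Fintype.card_fin] at hchain
  refine le_of_mul_le_mul_right ?_ (mod_cast n.factorial_pos : (0 : ℝ) < n !)
  calc (E : ℝ) * (n !)
    _ ≤ n.choose (n / 2 + 1) * (∑ B ∈ F, levelWeight n #B * #(prefixed B) - 2 * n !) :=
        excess_mul_factorial_le hn hF
    _ ≤ n.choose (n / 2 + 1) *
          ∑ B ∈ middleLevels F a b, #(prefixed B) * averageChainTerm c a b F B := by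
        gcongr
        exact hchain
    _ = (∑ B ∈ middleLevels F a b, levelRatio n #B * averageChainTerm c a b F B) * n ! := by
        rw [mul_sum, sum_mul]
        refine sum_congr rfl fun B _ ↦ ?_
        rw [← mul_assoc, choose_half_succ_mul_card_prefixed, mul_right_comm]

lemma sum_levelWeight_far_le (hn : 0 < n)
    (htail : ∀ k : ℕ, (k : ℝ) ≤ n * (1 / 2 - x) →
      ((n : ℝ) + 1) ^ 5 * n.choose k ≤ n.choose (n / 2 + 1)) (f : Numbering (Fin n)) :
    ∑ B ∈ F with f.IsPrefix B ∧ #B < n * (1 / 2 - x), levelWeight n #B ≤ 1 / ((n : ℝ) + 1) ^ 4 ∧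
    ∑ B ∈ F with f.IsPrefix B ∧ n * (1 / 2 + x) < #B, levelWeight n #B ≤
      1 / ((n : ℝ) + 1) ^ 4 := by
  constructor <;> refine sum_levelWeight_le hn (fun B hB ↦ (mem_filter.1 hB).2.1) fun B hB ↦ ?_
  · exact htail _ (mem_filter.1 hB).2.2.le
  · have hB_le := card_finset_fin_le B
    rw [← Nat.choose_symm hB_le]
    refine htail _ ?_
    rw [Nat.cast_sub hB_le]
    linarith [(mem_filter.1 hB).2.2]

lemma three_le_of_mem_middleLevels (ha : 3 ≤ a) (hb : b ≤ n - 3) (hB : B ∈ middleLevels F a b) :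
    3 ≤ #B ∧ 3 ≤ n - #B := by
  obtain ⟨-, hlow, hhigh⟩ := mem_filter.1 hB
  have hB_add : ((#B + 3 : ℕ) : ℝ) ≤ n := by
    push_cast
    linarith
  exact ⟨mod_cast ha.trans hlow, Nat.le_sub_of_add_le' (mod_cast hB_add)⟩

lemma card_mul_densityBelow_le (ha : 3 ≤ a) (hb : b ≤ n - 3) (hB : B ∈ middleLevels F a b) :
    #B * densityBelow a b F B ≤ #(membersBelow F B) := by
  refine (card_mul_crossingDensity_membersBelow_le (three_le_of_mem_middleLevels ha hb hB).1
    fun A hA ↦ (three_le_of_mem_middleLevels ha hb hA).1.trans' (by norm_num)).trans ?_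
  exact_mod_cast card_le_card fun A hA ↦
    mem_membersBelow.2 ((mem_membersBelow.1 hA).imp_left fun hAG ↦ (mem_filter.1 hAG).1)

lemma card_compl_mul_densityAbove_le (ha : 3 ≤ a) (hb : b ≤ n - 3)
    (hB : B ∈ middleLevels F a b) :
    (n - #B : ℕ) * densityAbove a b F B ≤ #(membersCovering F B) +
      (#(membersAbove F B) - #(membersCovering F B)) * (2 / ((n - #B : ℕ) - 1) : ℝ) := by
  have hthree {A} := three_le_of_mem_middleLevels (F := F) (B := A) ha hb
  have h := card_compl_mul_crossingDensity_membersAbove_le (X := Fin n)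
    (filter_subset _ F : middleLevels F a b ⊆ F) (B := B)
  rw [Fintype.card_fin] at h
  refine h (hthree hB).2 fun A hA ↦ ?_
  have := (hthree hA).2
  omega

lemma levelRatio_mul_averageChainTerm_le (hn : 0 < n) (hc : 0 ≤ c) (hc4 : 4 * c ≤ 1)
    (ha : 3 ≤ a) (hb : b ≤ n - 3) (hB : B ∈ middleLevels F a b) :
    levelRatio n #B * averageChainTerm c a b F B ≤
      densityBelow a b F B * densityAbove a b F B -
        levelRatio n (n / 2) * (1 - 4 * c) *
          ((1 - densityBelow a b F B) * (1 - densityAbove a b F B)) +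
        c * (#(membersBelow F B) * ((#(membersAbove F B)).choose 2 : ℝ) +
          #(membersAbove F B) * ((#(membersBelow F B)).choose 2 : ℝ)) := by
  have hB_le := card_finset_fin_le B
  obtain ⟨hp, hq⟩ := three_le_of_mem_middleLevels ha hb hB
  have hp3 : (3 : ℝ) ≤ #B := mod_cast hp
  have hq3 : (3 : ℝ) ≤ (n - #B : ℕ) := mod_cast hq
  have hku : (#(membersCovering F B) : ℝ) ≤ #(membersAbove F B) :=
    mod_cast card_le_card membersCovering_subset_membersAbove
  have habove : (n - #B : ℕ) * densityAbove a b F B ≤ #(membersAbove F B) := by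
    have := mul_le_mul_of_nonneg_left (two_div_sub_one_le_one hq3) (sub_nonneg.2 hku)
    linarith [card_compl_mul_densityAbove_le ha hb hB]
  exact mul_chainTerm_le hc hc4 (levelWeight_nonneg n #B) (levelWeight_le_one n #B)
    ((levelRatio_mul_levelWeight hn hB_le).trans_le (min_le_right _ _))
    (levelRatio_pos hn (Nat.div_le_self n 2)).le (levelRatio_half_le hB_le)
    crossingDensity_nonneg crossingDensity_le_one crossingDensity_nonneg crossingDensity_le_one
    (by positivity) (by positivity)
    (nonemptyIndicator_mul_le (by linarith) crossingDensity_le_one habove)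
    (nonemptyIndicator_mul_le (by linarith) crossingDensity_le_one
      (card_mul_densityBelow_le ha hb hB))

lemma levelRatio_half_mul_mem_Icc (hx : 0 < x) (hn : 100 ≤ x * n) (hc : 0 ≤ c)
    (hcx : 4 * c ≤ x / 2) (hc4 : 4 * c ≤ 1) :
    levelRatio n (n / 2) * (1 - 4 * c) ∈ Set.Icc (1 - x) 1 := by
  have hn0 : (0 : ℝ) < n := pos_of_mul_pos_right (by linarith : 0 < x * n) hx.le
  have hw : 1 - x / 50 ≤ levelRatio n (n / 2) :=
    (one_sub_two_div_le_levelRatio_half (mod_cast hn0)).trans' <| by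
      have : 2 / (n : ℝ) ≤ x / 50 := by
        rw [div_le_div_iff₀ hn0 (by norm_num)]
        linarith
      linarith
  have hw1 : levelRatio n (n / 2) ≤ 1 := levelRatio_half_le_one n
  exact ⟨by nlinarith, mul_le_one₀ hw1 (by linarith) (by linarith)⟩

lemma levelRatio_mul_averageChainTerm_mul_fB_le (hx : 0 < x) (hx1 : x ≤ 1 / 100)
    (hn : 1 ≤ x ^ 2 * n) (hc : 0 ≤ c) (hcx : 4 * c ≤ x / 2) (hcf : c * fB n ≤ x)
    (hB : B ∈ middleLevels F (n * (1 / 2 - 2 * x)) (n * (1 / 2 + 2 * x))) :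
    levelRatio n #B * averageChainTerm c (n * (1 / 2 - 2 * x)) (n * (1 / 2 + 2 * x)) F B * fB n ≤
      (1 + 101 * x) * (#(membersBelow F B) * ((#(membersCovering F B)).choose 2 : ℝ) +
        ((#(membersBelow F B)).choose 2 : ℝ) * #(membersAbove F B)) +
      101 * x * (#(membersBelow F B) * ((#(membersAbove F B)).choose 2 : ℝ)) := by
  have hxn : 100 ≤ x * n := by nlinarith
  have hn_large : (10000 : ℝ) ≤ n := by nlinarith
  have hn0 : 0 < n := mod_cast (by linarith : (0 : ℝ) < n)
  have ha : 3 ≤ n * (1 / 2 - 2 * x) := by nlinarith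
  have hb : n * (1 / 2 + 2 * x) ≤ n - 3 := by linarith
  obtain ⟨-, hlow, hhigh⟩ := mem_filter.1 hB
  have hq : n * (1 / 2 - 2 * x) ≤ (n - #B : ℕ) := by
    rw [Nat.cast_sub (card_finset_fin_le B)]
    linarith
  obtain ⟨hs, hs1⟩ := levelRatio_half_mul_mem_Icc hx hxn hc hcx (by linarith)
  have hterm := levelRatio_mul_averageChainTerm_le hn0 hc (by linarith) ha hb hB
  have hcount := mul_fB_le (a := densityBelow _ _ F B) (b := densityAbove _ _ F B)
    hx hx1 hn hs hs1 hlow hq (mod_cast Nat.sub_le n #B)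
    crossingDensity_nonneg crossingDensity_le_one crossingDensity_nonneg crossingDensity_le_one
    (card_mul_densityBelow_le ha hb hB) (card_compl_mul_densityAbove_le ha hb hB)
    (card_le_card membersCovering_subset_membersAbove)
  set S : ℝ := #(membersBelow F B) * ((#(membersAbove F B)).choose 2 : ℝ)
  set R : ℝ := #(membersAbove F B) * ((#(membersBelow F B)).choose 2 : ℝ)
  have hfar : c * fB n * (S + R) ≤ x * (S + R) := by gcongr
  have hcov : 0 ≤ x * (#(membersBelow F B) * ((#(membersCovering F B)).choose 2 : ℝ)) := by
    positivity
  have := mul_le_mul_of_nonneg_right hterm (Nat.cast_nonneg (α := ℝ) (fB n))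
  linarith

lemma sum_le_mul_numButterflies {G : Finset (Finset (Fin n))} (hGF : G ⊆ F) {y z : ℝ}
    (hy : 0 ≤ y) (hz : 0 ≤ z) :
    ∑ B ∈ G, (y * (#(membersBelow F B) * ((#(membersCovering F B)).choose 2 : ℝ) +
        ((#(membersBelow F B)).choose 2 : ℝ) * #(membersAbove F B)) +
      z * (#(membersBelow F B) * ((#(membersAbove F B)).choose 2 : ℝ))) ≤
    (y + z) * numButterflies F := by
  rw [sum_add_distrib, ← mul_sum, ← mul_sum, add_mul]
  gcongr
  · exact_mod_cast (sum_le_sum_of_subset hGF).trans (sum_covering_add_sum_below_le_numButterflies F)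
  · exact_mod_cast
      (sum_le_sum_of_subset hGF).trans (sum_card_below_mul_choose_card_above_le_numButterflies F)

theorem excess_mul_fB_le (hx : 0 < x) (hx1 : x ≤ 1 / 100) (hn : 1 ≤ x ^ 2 * n)
    (htail : ∀ k : ℕ, (k : ℝ) ≤ n * (1 / 2 - 2 * x) →
      ((n : ℝ) + 1) ^ 5 * n.choose k ≤ n.choose (n / 2 + 1)) (hF : #F = Sigma2 n + E) :
    (E : ℝ) * fB n ≤ (1 + 202 * x) * numButterflies F := by
  have hxn : 100 ≤ x * n := by nlinarith
  have hn0 : 0 < n :=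
    Nat.cast_pos.1 (pos_of_mul_pos_right (by linarith : 0 < x * n) hx.le)
  set c : ℝ := 1 / ((n : ℝ) + 1) ^ 4
  have hc : 0 ≤ c := by positivity
  have hc_cube : c * (n + 1) ^ 3 ≤ x / 100 := by
    rw [div_mul_eq_mul_div, div_le_div_iff₀ (by positivity) (by norm_num)]
    nlinarith [pow_pos (by positivity : (0 : ℝ) < n + 1) 3]
  have hcx : 4 * c ≤ x / 2 := by
    have : c ≤ c * (n + 1) ^ 3 := le_mul_of_one_le_right hc (one_le_pow₀ (by simp))
    linarith
  have hcf : c * fB n ≤ x := by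
    have := mul_le_mul_of_nonneg_left (fB_le n) hc
    linarith
  calc (E : ℝ) * fB n
    _ ≤ (∑ B ∈ middleLevels F (n * (1 / 2 - 2 * x)) (n * (1 / 2 + 2 * x)), levelRatio n #B *
          averageChainTerm c (n * (1 / 2 - 2 * x)) (n * (1 / 2 + 2 * x)) F B) * fB n := by
        gcongr
        exact excess_le_sum_levelRatio_mul_averageChainTerm hn0 hc (by linarith)
          (by gcongr; linarith) (fun f ↦ (sum_levelWeight_far_le hn0 htail f).1)
          (fun f ↦ (sum_levelWeight_far_le hn0 htail f).2) hF
    _ ≤ _ := by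
        rw [sum_mul]
        exact sum_le_sum fun B hB ↦
          levelRatio_mul_averageChainTerm_mul_fB_le hx hx1 hn hc hcx hcf hB
    _ ≤ (1 + 101 * x + 101 * x) * numButterflies F :=
        sum_le_mul_numButterflies (filter_subset _ _) (by positivity) (by positivity)
    _ = (1 + 202 * x) * numButterflies F := by ring

end Supersaturation

open Filter in
theorem supersat_butterfly_asymptotic_general (δ : ℝ) (hδ : 0 < δ) :
    ∃ n₀ : ℕ, ∀ n : ℕ, n₀ ≤ n → ∀ E : ℕ, ∀ F : Finset (Finset (Fin n)),
      F.card = Sigma2 n + E → (1 - δ) * E * fB n ≤ (numButterflies F : ℝ) := by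
  obtain ⟨x, hx, hxδ, hx1⟩ : ∃ x : ℝ, 0 < x ∧ 202 * x ≤ δ ∧ 202 * x ≤ 1 :=
    ⟨min δ 1 / 202, by positivity, by linarith [min_le_left δ 1], by linarith [min_le_right δ 1]⟩
  have hlarge : ∀ᶠ n : ℕ in atTop, 1 ≤ x ^ 2 * n :=
    (tendsto_natCast_atTop_atTop.const_mul_atTop (by positivity)).eventually_ge_atTop 1
  refine eventually_atTop.1 ?_
  filter_upwards [hlarge, eventually_pow_mul_choose_le_choose_half_succ
    (by positivity : 0 < 2 * x) 5] with n hn htail E F hF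
  calc (1 - δ) * E * fB n = (1 - δ) * (E * fB n) := by ring
    _ ≤ (1 - 202 * x) * (E * fB n) := by gcongr
    _ ≤ (1 - 202 * x) * ((1 + 202 * x) * numButterflies F) :=
        mul_le_mul_of_nonneg_left (excess_mul_fB_le hx (by linarith) hn htail hF) (by linarith)
    _ = numButterflies F - (202 * x) ^ 2 * numButterflies F := by ring
    _ ≤ numButterflies F := sub_le_self _ (by positivity)

/-- Main theorem, part (a): for `1 ≤ E ≤ 2^(n^(1-ε))`, every `F ⊆ 2^[n]` with
`|F| = Σ(n,2) + E` contains at least `(1−δ)·E·f(n)` copies of the butterfly. -/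
theorem supersat_butterfly_asymptotic (ε δ : ℝ) (hε : 0 < ε ∧ ε < 1) (hδ : 0 < δ ∧ δ < 1) :
    ∃ n₀ : ℕ, ∀ n : ℕ, n₀ ≤ n → ∀ E : ℕ, 1 ≤ E →
      (E : ℝ) ≤ (2 : ℝ) ^ ((n : ℝ) ^ (1 - ε)) →
      ∀ F : Finset (Finset (Fin n)), F.card = Sigma2 n + E →
      (1 - δ) * E * fB n ≤ (numButterflies F : ℝ) := by
  obtain ⟨n₀, h⟩ := supersat_butterfly_asymptotic_general δ hδ.1
  exact ⟨n₀, fun n hn E _ _ F hF ↦ h n hn E F hF⟩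
end
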